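/- arXiv:2204.07785 — 3 statements merged into one kernel-verified Lean document; each statement's English description precedes it below -/
import Mathlib

section
/- For every integer k ≥ 2, ∑_{n=1}^{k−1} 2^{n−1} G_0(k,n) = ∑_{n=1}^{k−1} (−1)^{k−n−1} 2^{n−1} G_0^*(k,n) = ∑ 2^{n+2m} (2^{n_1−1}−1)⋯(2^{n_m−1}−1) / (n! m! n_1⋯n_m (2^{n_1}−1)⋯(2^{n_m}−1)) · t(2) t(n_1)⋯t(n_m) (log 2)^n, where the last sum ranges over all n, m ≥ 0 and integers n_1, …, n_m ≥ 2 with n + n_1 + ⋯ + n_m = k − 2. -/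
open scoped BigOperators

/-- The multiple `t`-value of an index `K = (k₁, …, kₙ)` (a list of positive integers):
`t(K) = ∑_{m₁ > ⋯ > mₙ > 0, all mᵢ odd} 1 / (m₁^{k₁} ⋯ mₙ^{kₙ})`. -/
noncomputable def multT (K : List ℕ) : ℝ :=
  ∑' m : Fin K.length → ℕ,
    if (∀ i, Odd (m i)) ∧ (∀ i j : Fin K.length, i < j → m j < m i) then
      ∏ i, ((m i : ℝ) ^ K.get i)⁻¹
    else 0

/-- The multiple `t`-star value of an index `K = (k₁, …, kₙ)`:
`t*(K) = ∑_{m₁ ≥ ⋯ ≥ mₙ > 0, all mᵢ odd} 1 / (m₁^{k₁} ⋯ mₙ^{kₙ})`. -/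
noncomputable def multTStar (K : List ℕ) : ℝ :=
  ∑' m : Fin K.length → ℕ,
    if (∀ i, Odd (m i)) ∧ (∀ i j : Fin K.length, i < j → m j ≤ m i) then
      ∏ i, ((m i : ℝ) ^ K.get i)⁻¹
    else 0

/-- An index (list of positive integers) is admissible if its first entry is `> 1`. -/
def Admissible (K : List ℕ) : Prop := (∀ i ∈ K, 1 ≤ i) ∧ 2 ≤ K.headI

instance : DecidablePred Admissible := fun K =>
  inferInstanceAs (Decidable ((∀ i ∈ K, 1 ≤ i) ∧ 2 ≤ K.headI))

/-- `G0h k n s` is the sum of multiple `t`-values over all admissible indices of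
weight `k`, depth `n` and height `s`. -/
noncomputable def G0h (k n s : ℕ) : ℝ :=
  ∑' K : List ℕ,
    if Admissible K ∧ K.sum = k ∧ K.length = n ∧
        K.countP (fun i => decide (2 ≤ i)) = s then
      multT K
    else 0

/-- `G0hStar k n s` is the sum of multiple `t`-star values over all admissible indices of
weight `k`, depth `n` and height `s`. -/
noncomputable def G0hStar (k n s : ℕ) : ℝ :=
  ∑' K : List ℕ,
    if Admissible K ∧ K.sum = k ∧ K.length = n ∧
        K.countP (fun i => decide (2 ≤ i)) = s then
      multTStar K
    else 0

/-- `G0d k n` is the sum of multiple `t`-values over all admissible indices of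
weight `k` and depth `n`. -/
noncomputable def G0d (k n : ℕ) : ℝ :=
  ∑' K : List ℕ,
    if Admissible K ∧ K.sum = k ∧ K.length = n then multT K else 0

/-- `G0dStar k n` is the sum of multiple `t`-star values over all admissible indices of
weight `k` and depth `n`. -/
noncomputable def G0dStar (k n : ℕ) : ℝ :=
  ∑' K : List ℕ,
    if Admissible K ∧ K.sum = k ∧ K.length = n then multTStar K else 0

/-- The single `t`-value `t(n) = ∑_{m odd, m > 0} 1 / m^n`. -/
noncomputable def tval (n : ℕ) : ℝ := ∑' m : ℕ, 1 / (2 * (m : ℝ) + 1) ^ n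

/-- The ascending Pochhammer symbol `(a)ₙ = a (a+1) ⋯ (a+n-1)`. -/
noncomputable def poch (a : ℂ) (n : ℕ) : ℂ := ∏ i ∈ Finset.range n, (a + i)

/-- The generalized hypergeometric function `₃F₂(a, b, c; d, e; z)`. -/
noncomputable def hyp3F2 (a b c d e z : ℂ) : ℂ :=
  ∑' n : ℕ, poch a n * poch b n * poch c n /
      ((n.factorial : ℂ) * poch d n * poch e n) * z ^ n

/-- The generalized hypergeometric function with upper parameters `as` and lower
parameters `bs`. -/
noncomputable def hypF (as bs : List ℂ) (z : ℂ) : ℂ :=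
  ∑' n : ℕ, (as.map fun a => poch a n).prod /
      ((n.factorial : ℂ) * (bs.map fun b => poch b n).prod) * z ^ n

/-- The one-variable multiple polylogarithm
`L_K(z) = ∑_{m₁ > ⋯ > mₙ > 0, all mᵢ odd} z^{m₁} / (m₁^{k₁} ⋯ mₙ^{kₙ})`. -/
noncomputable def Lt (K : List ℕ) (z : ℝ) : ℝ :=
  ∑' m : Fin K.length → ℕ,
    if h : (∀ i, Odd (m i)) ∧ (∀ i j : Fin K.length, i < j → m j < m i) ∧
        0 < K.length then
      z ^ (m ⟨0, h.2.2⟩) * ∏ i, ((m i : ℝ) ^ K.get i)⁻¹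
    else 0

/-- The one-variable star multiple polylogarithm
`L*_K(z) = ∑_{m₁ ≥ ⋯ ≥ mₙ > 0, all mᵢ odd} z^{m₁} / (m₁^{k₁} ⋯ mₙ^{kₙ})`. -/
noncomputable def LtStar (K : List ℕ) (z : ℝ) : ℝ :=
  ∑' m : Fin K.length → ℕ,
    if h : (∀ i, Odd (m i)) ∧ (∀ i j : Fin K.length, i < j → m j ≤ m i) ∧
        0 < K.length then
      z ^ (m ⟨0, h.2.2⟩) * ∏ i, ((m i : ℝ) ^ K.get i)⁻¹
    else 0

/-- `G0hz k n s z` is the sum of `L_K(z)` over all admissible indices `K` of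
weight `k`, depth `n` and height `s`. -/
noncomputable def G0hz (k n s : ℕ) (z : ℝ) : ℝ :=
  ∑' K : List ℕ,
    if Admissible K ∧ K.sum = k ∧ K.length = n ∧
        K.countP (fun i => decide (2 ≤ i)) = s then
      Lt K z
    else 0

/-- `G0hzStar k n s z` is the sum of `L*_K(z)` over all admissible indices `K` of
weight `k`, depth `n` and height `s`. -/
noncomputable def G0hzStar (k n s : ℕ) (z : ℝ) : ℝ :=
  ∑' K : List ℕ,
    if Admissible K ∧ K.sum = k ∧ K.length = n ∧
        K.countP (fun i => decide (2 ≤ i)) = s then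
      LtStar K z
    else 0

/-!
Write `k = p + 2` and let `W(p)` be the weighted sum of multiple `t`-values. Collecting the indices
of all depths by their largest summation variable `m = 2j + 1` turns `∑ W(p) x ^ p` into

`∑ⱼ m⁻² / (1 - x / m) * ∏_{i < j} (1 + 2 (x / (2i + 1)) / (1 - x / (2i + 1)))`,

which is `(1 - x)⁻¹ ₃F₂(1, 1/2, (1 + x)/2; 3/2, (3 - x)/2; 1)`. This series is well-poised, so
Dixon's theorem evaluates it as `π/8 * (Γ((1 - x)/2) / Γ(1 - x/2)) ^ 2`. Dixon's theorem itself
comes from a Wilf–Zeilberger pair for the shift `a ↦ a + 2`, together with the limit `a → ∞`.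

Up to the factor `√π`, the logarithm of the quotient of Gamma values is the power series
`∑ η(n) xⁿ / n`, where `η(1) = log 2` and `η(n)` is a rational multiple of `t(n)` for `n ≥ 2`.
Expanding its exponential gives the explicit sum.

The star sums agree with the unstarred ones summand by summand in the largest variable: strictly
nested sums weighted by `2` per entry and weakly nested sums weighted by `-2` per entry satisfy the
same recurrence, up to the sign `(-1) ^ p`.
-/

section Summation

variable {α β ι : Type*}

theorem hasSum_prod_of_nonneg {f : α × β → ℝ} {g : α → ℝ} {s : ℝ} (hf : 0 ≤ f)
    (hrow : ∀ a, HasSum (fun b => f (a, b)) (g a)) (hg : HasSum g s) : HasSum f s := by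
  have hsum : Summable f := (summable_prod_of_nonneg hf).2
    ⟨fun a => (hrow a).summable, by simpa only [(hrow _).tsum_eq] using hg.summable⟩
  exact (hsum.hasSum.prod_fiberwise hrow).unique hg ▸ hsum.hasSum

theorem hasSum_tsum_comm_of_nonneg {f : α → β → ℝ} {g : β → ℝ} {s : ℝ} (hf : ∀ a b, 0 ≤ f a b)
    (hcol : ∀ b, HasSum (fun a => f a b) (g b)) (hg : HasSum g s) :
    HasSum (fun a => ∑' b, f a b) s := by
  have hba : HasSum (fun p : β × α => f p.2 p.1) s :=
    hasSum_prod_of_nonneg (fun p => hf p.2 p.1) hcol hg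
  have hab : HasSum (fun p : α × β => f p.1 p.2) s := (Equiv.prodComm β α).hasSum_iff.1 hba
  exact hab.prod_fiberwise fun a => (hab.summable.prod_factor a).hasSum

theorem hasSum_pi_fin_prod {f : ι → ℝ} {s : ℝ} (hf : HasSum f s) (n : ℕ) :
    HasSum (fun v : Fin n → ι => ∏ i, f (v i)) (s ^ n) := by
  induction n with
  | zero => simp [hasSum_unique]
  | succ n ih =>
    have hsum : Summable fun p : ι × (Fin n → ι) => f p.1 * ∏ i, f (p.2 i) :=
      summable_mul_of_summable_norm (g := fun v : Fin n → ι => ∏ i, f (v i))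
        hf.summable.norm ih.summable.norm
    let e : ι × (Fin n → ι) ≃ (Fin (n + 1) → ι) := Fin.consEquiv fun _ => ι
    have he (p : ι × (Fin n → ι)) : ∏ i, f (e p i) = f p.1 * ∏ i, f (p.2 i) := by
      simp [e, Fin.prod_univ_succ, Fin.consEquiv]
    rw [pow_succ', ← e.hasSum_iff]
    exact (hf.mul ih hsum).congr_fun he

theorem hasSum_list_prod_div_factorial {f : ι → ℝ} {s : ℝ} (hf : HasSum f s) :
    HasSum (fun L : List ι => (L.map f).prod / L.length.factorial) (Real.exp s) := by
  have hexp (t : ℝ) : HasSum (fun n : ℕ => t ^ n / n.factorial) (Real.exp t) :=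
    Real.exp_eq_exp_ℝ ▸ NormedSpace.expSeries_div_hasSum_exp t
  have hlen {g : ι → ℝ} {t : ℝ} (hg : HasSum g t) (n : ℕ) :
      HasSum (fun v : Fin n → ι => (∏ i, g (v i)) / n.factorial) (t ^ n / n.factorial) :=
    (hasSum_pi_fin_prod hg n).div_const _
  have hterm (v : Σ n, Fin n → ι) :
      ((List.equivSigmaTuple.symm v).map f).prod / (List.equivSigmaTuple.symm v).length.factorial
        = (∏ i, f (v.2 i)) / v.1.factorial := by
    simp [List.equivSigmaTuple, List.map_ofFn, List.prod_ofFn]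
  have hnorm : Summable fun v : Σ n, Fin n → ι => (∏ i, ‖f (v.2 i)‖) / v.1.factorial := by
    refine (summable_sigma_of_nonneg fun v => by positivity).2
      ⟨fun n => (hlen hf.summable.norm.hasSum n).summable, ?_⟩
    simpa only [(hlen hf.summable.norm.hasSum _).tsum_eq] using (hexp _).summable
  have hsum : Summable fun v : Σ n, Fin n → ι => (∏ i, f (v.2 i)) / v.1.factorial :=
    .of_norm (by simpa [norm_prod] using hnorm)
  rw [← List.equivSigmaTuple.symm.hasSum_iff]
  simp only [Function.comp_def, hterm]
  exact (hsum.hasSum.sigma fun n => hlen hf n).unique (hexp s) ▸ hsum.hasSum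

theorem hasSum_tsum_ite_mul_pow {g : ι → ℝ} {deg : ι → ℕ} {x s : ℝ}
    (h : HasSum (fun i => g i * x ^ deg i) s) :
    HasSum (fun n => (∑' i, if deg i = n then g i else 0) * x ^ n) s := by
  refine (h.tsum_fiberwise deg).congr_fun fun n => ?_
  rw [tsum_subtype (deg ⁻¹' ({n} : Set ℕ)) fun i => g i * x ^ deg i, ← tsum_mul_right]
  refine tsum_congr fun i => ?_
  by_cases hi : deg i = n <;> simp [Set.indicator, hi]

end Summation

section PowerSeries

open Filter Set FormalMultilinearSeries
open scoped Topology

theorem hasFPowerSeriesAt_zero_ofScalars_of_summable {d : ℕ → ℝ} {r : ℝ} (hr : 0 < r)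
    (hd : Summable fun n => d n * r ^ n) :
    HasFPowerSeriesAt (ofScalarsSum d) (ofScalars ℝ d) 0 := by
  have hle : ENNReal.ofReal r ≤ (ofScalars ℝ d).radius := by
    refine le_radius_of_summable _ ?_
    simpa [ofScalars_norm, hr.le, abs_of_pos hr] using hd.norm
  exact ⟨_, (ofScalars ℝ d).hasFPowerSeriesOnBall ((ENNReal.ofReal_pos.2 hr).trans_le hle)⟩

theorem eq_zero_of_hasSum_mul_pow_zero {d : ℕ → ℝ} {r : ℝ} (hr : 0 < r)
    (hd : ∀ x ∈ Ioo 0 r, HasSum (fun n => d n * x ^ n) 0) : d = 0 := by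
  have hseries := hasFPowerSeriesAt_zero_ofScalars_of_summable (half_pos hr)
    (hd _ ⟨half_pos hr, half_lt_self hr⟩).summable
  have hright : ∀ᶠ x in 𝓝[>] (0 : ℝ), ofScalarsSum d x = 0 := by
    filter_upwards [Ioo_mem_nhdsGT hr] with x hx
    simpa [ofScalars_sum_eq] using (hd x hx).tsum_eq
  have hfreq : ∃ᶠ x in 𝓝[≠] (0 : ℝ), ofScalarsSum d x = 0 :=
    hright.frequently.filter_mono (nhdsGT_le_nhdsNE 0)
  have hzero := hseries.analyticAt.frequently_zero_iff_eventually_zero.1 hfreq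
  exact (ofScalars_series_eq_zero ℝ).1 (hseries.eq_zero_of_eventually hzero)

theorem eq_of_hasSum_mul_pow {a b : ℕ → ℝ} {f : ℝ → ℝ} {r : ℝ} (hr : 0 < r)
    (ha : ∀ x ∈ Ioo 0 r, HasSum (fun n => a n * x ^ n) (f x))
    (hb : ∀ x ∈ Ioo 0 r, HasSum (fun n => b n * x ^ n) (f x)) : a = b := by
  refine sub_eq_zero.1 (eq_zero_of_hasSum_mul_pow_zero hr fun x hx => ?_)
  simpa [sub_mul] using (ha x hx).sub (hb x hx)

end PowerSeries

section GammaAsymptotics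

open Filter
open scoped Topology Nat

theorem Gamma_add_natCast {s : ℝ} (hs : 0 < s) (n : ℕ) :
    Real.Gamma (s + n) = Real.Gamma s * ∏ i ∈ Finset.range n, (s + i) := by
  induction n with
  | zero => simp
  | succ n ih =>
    rw [Finset.prod_range_succ, Nat.cast_succ, ← add_assoc, Real.Gamma_add_one (by positivity), ih]
    ring

theorem tendsto_prod_range_add_div_rpow_mul_factorial {s : ℝ} (hs : 0 < s) :
    Tendsto (fun n : ℕ => (∏ i ∈ Finset.range n, (s + i)) / ((n : ℝ) ^ (s - 1) * n !)) atTop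
      (𝓝 (Real.Gamma s)⁻¹) := by
  have hratio : Tendsto (fun n : ℕ => (n : ℝ) / (s + n)) atTop (𝓝 1) := by
    simpa using tendsto_add_mul_div_add_mul_atTop_nhds (0 : ℝ) s 1 one_ne_zero
  have hlim := ((Real.GammaSeq_tendsto_Gamma s).inv₀ (Real.Gamma_pos_of_pos hs).ne').mul hratio
  rw [mul_one] at hlim
  refine hlim.congr' ?_
  filter_upwards [eventually_gt_atTop 0] with n hn
  have hn' : (0 : ℝ) < n := by exact_mod_cast hn
  rw [Real.GammaSeq, Finset.prod_range_succ, Real.rpow_sub_one hn'.ne', inv_div]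
  field_simp

theorem tendsto_prod_range_mul_div_mul {p q r s : ℝ} (hp : 0 < p) (hq : 0 < q) (hr : 0 < r)
    (hs : 0 < s) (h : p + q = r + s) :
    Tendsto (fun n : ℕ => ∏ i ∈ Finset.range n, (p + i) * (q + i) / ((r + i) * (s + i))) atTop
      (𝓝 (Real.Gamma r * Real.Gamma s / (Real.Gamma p * Real.Gamma q))) := by
  have hlim {t : ℝ} (ht : 0 < t) := tendsto_prod_range_add_div_rpow_mul_factorial ht
  have hquot := ((hlim hp).mul (hlim hq)).div ((hlim hr).mul (hlim hs))
    (by have := Real.Gamma_pos_of_pos hr; have := Real.Gamma_pos_of_pos hs; positivity)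
  rw [← mul_inv, ← mul_inv, inv_div_inv] at hquot
  refine hquot.congr' ?_
  filter_upwards [eventually_gt_atTop 0] with n hn
  have hn' : (0 : ℝ) < n := by exact_mod_cast hn
  have hpow : (n : ℝ) ^ (p - 1) * n ^ (q - 1) = n ^ (r - 1) * n ^ (s - 1) := by
    rw [← Real.rpow_add hn', ← Real.rpow_add hn']
    congr 1
    linarith
  simp only [Finset.prod_div_distrib, Finset.prod_mul_distrib, Pi.div_apply]
  rw [div_mul_div_comm, div_mul_div_comm, mul_mul_mul_comm ((n : ℝ) ^ (p - 1)), hpow,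
    mul_mul_mul_comm ((n : ℝ) ^ (r - 1)), div_div_div_cancel_right₀ (by positivity)]

theorem tendsto_Gamma_mul_Gamma_div_atTop {p q r s : ℝ} (hp : 0 < p) (hq : 0 < q) (hr : 0 < r)
    (hs : 0 < s) (h : p + q = r + s) :
    Tendsto (fun n : ℕ => Real.Gamma (p + n) * Real.Gamma (q + n) /
      (Real.Gamma (r + n) * Real.Gamma (s + n))) atTop (𝓝 1) := by
  have hpos {t : ℝ} (ht : 0 < t) := (Real.Gamma_pos_of_pos ht).ne'
  have hlim := (tendsto_prod_range_mul_div_mul hp hq hr hs h).const_mul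
    (Real.Gamma p * Real.Gamma q / (Real.Gamma r * Real.Gamma s))
  rw [div_mul_div_cancel₀ (mul_ne_zero (hpos hr) (hpos hs)),
    div_self (mul_ne_zero (hpos hp) (hpos hq))] at hlim
  refine hlim.congr fun n => ?_
  simp only [Gamma_add_natCast hp, Gamma_add_natCast hq, Gamma_add_natCast hr,
    Gamma_add_natCast hs, Finset.prod_div_distrib, Finset.prod_mul_distrib]
  rw [div_mul_div_comm, mul_mul_mul_comm, mul_mul_mul_comm (Real.Gamma r)]

end GammaAsymptotics

section Dixon

open Filter Finset
open scoped Topology Nat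

/-- The `n`-th term of the well-poised series `₃F₂(a, b, c; 1 + a - b, 1 + a - c; 1)`. -/
noncomputable def dixonTerm (a b c : ℝ) (n : ℕ) : ℝ :=
  ∏ i ∈ range n, (a + i) * (b + i) * (c + i) / ((1 + i) * (1 + a - b + i) * (1 + a - c + i))

/-- The value `Γ(s) Γ(s - b - c) / (Γ(s - b) Γ(s - c))` of `₂F₁(b, c; s; 1)` in Gauss's theorem. -/
noncomputable def gaussValue (s b c : ℝ) : ℝ :=
  Real.Gamma s * Real.Gamma (s - b - c) / (Real.Gamma (s - b) * Real.Gamma (s - c))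

/-- The right-hand side of Dixon's summation of the well-poised `₃F₂` series at `1`. -/
noncomputable def dixonValue (a b c : ℝ) : ℝ :=
  gaussValue (1 + a / 2) b c / gaussValue (1 + a) b c

/-- The quotient `dixonValue a b c / dixonValue (a + 2) b c`. -/
noncomputable def dixonRatio (a b c : ℝ) : ℝ :=
  2 * (1 + a) * (1 + a / 2 - b) * (1 + a / 2 - c) * ((1 + a - b - c) * (2 + a - b - c)) /
    ((1 + a - b) * (2 + a - b) * ((1 + a - c) * (2 + a - c)) * (1 + a / 2 - b - c))

/-- The companion of `dixonTerm` in the Wilf–Zeilberger proof of Dixon's theorem: the antidifference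
in `n` of `dixonTerm a b c n - dixonRatio a b c * dixonTerm (a + 2) b c n`. -/
noncomputable def dixonCertificate (a b c : ℝ) (n : ℕ) : ℝ :=
  n * dixonTerm a b c n *
    (((1 - b) * (1 - c) / a - (n + a) * (n + 3 + 2 * (a - b - c)) / (2 + a - 2 * b - 2 * c)) /
      ((1 + a - b + n) * (1 + a - c + n)))

variable {a b c : ℝ}

theorem dixonTerm_succ (a b c : ℝ) (n : ℕ) :
    dixonTerm a b c (n + 1) = dixonTerm a b c n *
      ((a + n) * (b + n) * (c + n) / ((1 + n) * (1 + a - b + n) * (1 + a - c + n))) :=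
  prod_range_succ _ n

theorem dixonTerm_pos (ha : 0 < a) (hb : 0 < b) (hc : 0 < c) (hab : 0 < 1 + a - b)
    (hac : 0 < 1 + a - c) (n : ℕ) : 0 < dixonTerm a b c n :=
  prod_pos fun i _ => by positivity

theorem tendsto_dixonTerm_div_rpow (ha : 0 < a) (hb : 0 < b) (hc : 0 < c) (hab : 0 < 1 + a - b)
    (hac : 0 < 1 + a - c) :
    ∃ C : ℝ, Tendsto (fun n : ℕ => dixonTerm a b c n / (n : ℝ) ^ (2 * (b + c) - a - 3)) atTop
      (𝓝 C) := by
  have hlim {t : ℝ} (ht : 0 < t) := tendsto_prod_range_add_div_rpow_mul_factorial ht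
  have hne {t : ℝ} (ht : 0 < t) := inv_ne_zero (Real.Gamma_pos_of_pos ht).ne'
  refine ⟨_, ((((hlim ha).mul (hlim hb)).mul (hlim hc)).div
    (((hlim one_pos).mul (hlim hab)).mul (hlim hac))
    (mul_ne_zero (mul_ne_zero (hne one_pos) (hne hab)) (hne hac))).congr' ?_⟩
  filter_upwards [eventually_gt_atTop 0] with n hn
  have hn' : (0 : ℝ) < n := by exact_mod_cast hn
  have hpow : (n : ℝ) ^ (a - 1) * n ^ (b - 1) * n ^ (c - 1) = n ^ (2 * (b + c) - a - 3) *
      (n ^ ((1 : ℝ) - 1) * n ^ (1 + a - b - 1) * n ^ (1 + a - c - 1)) := by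
    simp only [← Real.rpow_add hn']
    congr 1
    ring
  have hprod : dixonTerm a b c n = (∏ i ∈ range n, (a + i)) * (∏ i ∈ range n, (b + i)) *
      (∏ i ∈ range n, (c + i)) / ((∏ i ∈ range n, (1 + i : ℝ)) *
      (∏ i ∈ range n, (1 + a - b + i)) * ∏ i ∈ range n, (1 + a - c + i)) := by
    simp only [dixonTerm, prod_div_distrib, prod_mul_distrib]
  have hfac : (n ! : ℝ) ≠ 0 := by positivity
  simp only [Pi.div_apply, hprod, div_mul_div_comm, mul_mul_mul_comm _ (n ! : ℝ)]
  field_simp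
  linear_combination -hpow

theorem isBigO_dixonTerm_rpow (ha : 0 < a) (hb : 0 < b) (hc : 0 < c) (hab : 0 < 1 + a - b)
    (hac : 0 < 1 + a - c) :
    dixonTerm a b c =O[atTop] fun n : ℕ => (n : ℝ) ^ (2 * (b + c) - a - 3) := by
  obtain ⟨C, hC⟩ := tendsto_dixonTerm_div_rpow ha hb hc hab hac
  refine Asymptotics.isBigO_of_div_tendsto_nhds ?_ C hC
  filter_upwards [eventually_gt_atTop 0] with n hn h0
  have hn' : (0 : ℝ) < n := by exact_mod_cast hn
  exact absurd h0 (Real.rpow_pos_of_pos hn' _).ne'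

theorem summable_dixonTerm (ha : 0 < a) (hb : 0 < b) (hc : 0 < c) (h : b + c < 1 + a / 2) :
    Summable (dixonTerm a b c) :=
  summable_of_isBigO_nat (Real.summable_nat_rpow.2 (by linarith))
    (isBigO_dixonTerm_rpow ha hb hc (by linarith) (by linarith))

theorem tendsto_natCast_mul_dixonTerm (ha : 0 < a) (hb : 0 < b) (hc : 0 < c)
    (h : b + c < 1 + a / 2) : Tendsto (fun n : ℕ => n * dixonTerm a b c n) atTop (𝓝 0) := by
  have hpow : Tendsto (fun n : ℕ => (n : ℝ) ^ (-(2 + a - 2 * b - 2 * c))) atTop (𝓝 0) :=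
    (tendsto_rpow_neg_atTop (by linarith)).comp tendsto_natCast_atTop_atTop
  refine (((Asymptotics.isBigO_refl (fun n : ℕ => (n : ℝ)) atTop).mul
    (isBigO_dixonTerm_rpow ha hb hc (by linarith) (by linarith))).congr' .rfl ?_).trans_tendsto hpow
  filter_upwards with n
  rw [← Real.rpow_one_add' n.cast_nonneg (by linarith)]
  congr 1
  ring

theorem tendsto_dixonCertificate (ha : 0 < a) (hb : 0 < b) (hc : 0 < c)
    (h : b + c < 1 + a / 2) : Tendsto (dixonCertificate a b c) atTop (𝓝 0) := by
  have hlin (p q : ℝ) : Tendsto (fun n : ℕ => (n + p) / (q + n)) atTop (𝓝 1) := by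
    simpa [add_comm] using tendsto_add_mul_div_add_mul_atTop_nhds p q 1 one_ne_zero
  have hinv (q : ℝ) : Tendsto (fun n : ℕ => 1 / (q + n)) atTop (𝓝 0) := by
    simpa using tendsto_add_mul_div_add_mul_atTop_nhds 1 q 0 one_ne_zero
  have hfactor := (((hinv (1 + a - b)).mul (hinv (1 + a - c))).const_mul
    ((1 - b) * (1 - c) / a)).sub (((hlin a (1 + a - b)).mul
      (hlin (3 + 2 * (a - b - c)) (1 + a - c))).div_const (2 + a - 2 * b - 2 * c))
  have hlim := (tendsto_natCast_mul_dixonTerm ha hb hc h).mul hfactor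
  rw [zero_mul] at hlim
  refine hlim.congr fun n => ?_
  rw [dixonCertificate]
  generalize 1 + a - b + (n : ℝ) = y
  generalize 1 + a - c + (n : ℝ) = z
  ring

theorem dixonTerm_add_two (ha : 0 < a) (hab : 0 < 1 + a - b) (hac : 0 < 1 + a - c) (n : ℕ) :
    dixonTerm (a + 2) b c n = dixonTerm a b c n *
      ((a + n) * (a + 1 + n) * ((1 + a - b) * (2 + a - b)) * ((1 + a - c) * (2 + a - c)) /
        (a * (a + 1) * ((1 + a - b + n) * (2 + a - b + n)) *
          ((1 + a - c + n) * (2 + a - c + n)))) := by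
  have hab' : 0 < 2 + a - b := by linarith
  have hac' : 0 < 2 + a - c := by linarith
  induction n with
  | zero => simp [dixonTerm]; field_simp
  | succ n ih =>
    have hshift {t : ℝ} (ht : 0 < t) : t + (n + 1 : ℕ) ≠ 0 := by positivity
    have hden : 0 < 1 + (a + 2) - b + n := by have := n.cast_nonneg (α := ℝ); linarith
    have hden' : 0 < 1 + (a + 2) - c + n := by have := n.cast_nonneg (α := ℝ); linarith
    have := hshift hab'
    have := hshift hac'
    have := hshift hab
    have := hshift hac
    rw [dixonTerm_succ, dixonTerm_succ, ih]
    push_cast at *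
    field_simp
    ring

theorem gaussValue_pos {s : ℝ} (hb : 0 < b) (hc : 0 < c) (h : b + c < s) :
    0 < gaussValue s b c := by
  have hG {t : ℝ} (ht : 0 < t) := Real.Gamma_pos_of_pos ht
  exact div_pos (mul_pos (hG (by linarith)) (hG (by linarith)))
    (mul_pos (hG (by linarith)) (hG (by linarith)))

theorem gaussValue_add_one {s : ℝ} (hb : 0 < b) (hc : 0 < c) (h : b + c < s) :
    gaussValue (s + 1) b c = s * (s - b - c) / ((s - b) * (s - c)) * gaussValue s b c := by
  have hG {t : ℝ} (ht : 0 < t) := Real.Gamma_add_one ht.ne'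
  rw [gaussValue, gaussValue, show s + 1 - b - c = s - b - c + 1 by ring,
    show s + 1 - b = s - b + 1 by ring, show s + 1 - c = s - c + 1 by ring, hG (by linarith),
    hG (by linarith), hG (by linarith), hG (by linarith), div_mul_div_comm, mul_mul_mul_comm,
    mul_mul_mul_comm (s - b)]

theorem tendsto_gaussValue_add_natCast {s : ℝ} (hb : 0 < b) (hc : 0 < c) (h : b + c < s) :
    Tendsto (fun n : ℕ => gaussValue (s + n) b c) atTop (𝓝 1) := by
  refine (tendsto_Gamma_mul_Gamma_div_atTop (p := s) (q := s - b - c) (r := s - b) (s := s - c)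
    (by linarith) (by linarith) (by linarith) (by linarith) (by ring)).congr fun n => ?_
  rw [gaussValue]
  ring_nf

theorem dixonValue_pos (ha : 0 < a) (hb : 0 < b) (hc : 0 < c) (h : b + c < 1 + a / 2) :
    0 < dixonValue a b c :=
  div_pos (gaussValue_pos hb hc h) (gaussValue_pos hb hc (by linarith))

theorem dixonValue_eq_mul_add_two (ha : 0 < a) (hb : 0 < b) (hc : 0 < c)
    (h : b + c < 1 + a / 2) :
    dixonValue a b c = dixonRatio a b c * dixonValue (a + 2) b c := by
  have hone := gaussValue_pos hb hc h
  have htwo := gaussValue_pos (s := 1 + a) hb hc (by linarith)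
  have h1 : 0 < 2 + a - 2 * b := by linarith
  have h2 : 0 < 2 + a - 2 * c := by linarith
  have h3 : 0 < 2 + a - 2 * b - 2 * c := by linarith
  have h4 : 0 < 1 + a - b := by linarith
  have h5 : 0 < 1 + a - c := by linarith
  have h6 : 0 < 1 + a - b - c := by linarith
  have h7 : 0 < 2 + a - b := by linarith
  have h8 : 0 < 2 + a - c := by linarith
  have h9 : 0 < 2 + a - b - c := by linarith
  rw [dixonRatio, dixonValue, dixonValue, show 1 + (a + 2) / 2 = 1 + a / 2 + 1 by ring,
    show 1 + (a + 2) = 1 + a + 1 + 1 by ring, gaussValue_add_one hb hc h,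
    gaussValue_add_one hb hc (s := 1 + a + 1) (by linarith),
    gaussValue_add_one hb hc (s := 1 + a) (by linarith), show 1 + a + 1 = 2 + a by ring]
  generalize gaussValue (1 + a / 2) b c = u at *
  generalize gaussValue (1 + a) b c = v at *
  field_simp

theorem dixonTerm_sub_mul_dixonTerm_add_two (ha : 0 < a) (hb : 0 < b) (hc : 0 < c)
    (h : b + c < 1 + a / 2) (n : ℕ) :
    dixonTerm a b c n - dixonRatio a b c * dixonTerm (a + 2) b c n =
      dixonCertificate a b c (n + 1) - dixonCertificate a b c n := by
  have h1 : 0 < 1 + a - b := by linarith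
  have h2 : 0 < 2 + a - b := by linarith
  have h3 : 0 < 1 + a - c := by linarith
  have h4 : 0 < 2 + a - c := by linarith
  have h5 : 0 < 2 + a - 2 * b - 2 * c := by linarith
  have h6 : 1 + a - b + (n + 1) = 2 + a - b + n := by ring
  have h7 : 1 + a - c + (n + 1) = 2 + a - c + n := by ring
  rw [dixonTerm_add_two ha h1 h3, dixonCertificate, dixonCertificate, dixonTerm_succ, dixonRatio,
    Nat.cast_succ, h6, h7, show 1 + a / 2 - b - c = (2 + a - 2 * b - 2 * c) / 2 by ring]
  generalize dixonTerm a b c n = u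
  field_simp
  ring

theorem tsum_dixonTerm_eq_mul_add_two (ha : 0 < a) (hb : 0 < b) (hc : 0 < c)
    (h : b + c < 1 + a / 2) :
    ∑' n, dixonTerm a b c n = dixonRatio a b c * ∑' n, dixonTerm (a + 2) b c n := by
  have hsum := (summable_dixonTerm ha hb hc h).hasSum.sub
    ((summable_dixonTerm (a := a + 2) (by linarith) hb hc (by linarith)).hasSum.mul_left
      (dixonRatio a b c))
  simp only [dixonTerm_sub_mul_dixonTerm_add_two ha hb hc h] at hsum
  have hlim : Tendsto (fun N => ∑ n ∈ range N,
      (dixonCertificate a b c (n + 1) - dixonCertificate a b c n)) atTop (𝓝 0) := by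
    simp only [sum_range_sub]
    have hzero : dixonCertificate a b c 0 = 0 := by simp [dixonCertificate]
    simpa only [hzero, sub_zero] using tendsto_dixonCertificate ha hb hc h
  exact sub_eq_zero.1 (tendsto_nhds_unique hsum.tendsto_sum_nat hlim)

theorem tsum_dixonTerm_div_dixonValue_add_two_mul (ha : 0 < a) (hb : 0 < b) (hc : 0 < c)
    (h : b + c < 1 + a / 2) (N : ℕ) :
    (∑' n, dixonTerm (a + 2 * N) b c n) / dixonValue (a + 2 * N) b c =
      (∑' n, dixonTerm a b c n) / dixonValue a b c := by
  induction N with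
  | zero => simp
  | succ N ih =>
    have haN : 0 < a + 2 * N := by positivity
    have hN : b + c < 1 + (a + 2 * N) / 2 := by linarith [N.cast_nonneg (α := ℝ)]
    have hR : dixonRatio (a + 2 * N) b c ≠ 0 :=
      left_ne_zero_of_mul (dixonValue_eq_mul_add_two haN hb hc hN ▸
        (dixonValue_pos haN hb hc hN).ne')
    rw [← ih, tsum_dixonTerm_eq_mul_add_two haN hb hc hN, dixonValue_eq_mul_add_two haN hb hc hN,
      mul_div_mul_left _ _ hR, Nat.cast_succ, mul_add_one, add_assoc]

theorem tendsto_dixonValue_add_two_mul (ha : 0 < a) (hb : 0 < b) (hc : 0 < c)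
    (h : b + c < 1 + a / 2) :
    Tendsto (fun N : ℕ => dixonValue (a + 2 * N) b c) atTop (𝓝 1) := by
  have htwo := (tendsto_gaussValue_add_natCast (s := 1 + a) hb hc (by linarith)).comp
    (tendsto_id.const_mul_atTop' two_pos)
  have hlim := (tendsto_gaussValue_add_natCast hb hc h).div htwo one_ne_zero
  rw [div_one] at hlim
  refine hlim.congr fun N => ?_
  simp only [Pi.div_apply, Function.comp_apply, id, Nat.cast_mul, Nat.cast_ofNat]
  rw [dixonValue, add_div, mul_div_cancel_left₀ _ two_ne_zero, add_assoc, add_assoc]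

theorem dixonTerm_le_dixonTerm {t : ℝ} (ha : 0 < a) (hat : a ≤ t) (hb : 0 < b) (hc : 0 < c)
    (hab : 0 < 1 + a - b) (hac : 0 < 1 + a - c) (hbc : (1 - b) * (1 - c) ≤ a * t) (n : ℕ) :
    dixonTerm t b c n ≤ dixonTerm a b c n := by
  have ht : 0 < t := ha.trans_le hat
  have htb : 0 < 1 + t - b := by linarith
  have htc : 0 < 1 + t - c := by linarith
  refine prod_le_prod (fun i _ => by positivity) fun i _ => ?_
  -- For `x ≤ y`, `z / ((z + 1 - b) (z + 1 - c))` is smaller at `y` than at `x` if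
  -- `(1 - b) (1 - c) ≤ x y`.
  have hfactor : (t + i) / ((1 + t - b + i) * (1 + t - c + i)) ≤
      (a + i) / ((1 + a - b + i) * (1 + a - c + i)) := by
    rw [div_le_div_iff₀ (by positivity) (by positivity)]
    have hprod : (1 - b) * (1 - c) ≤ (a + i) * (t + i) :=
      hbc.trans (mul_le_mul (by linarith) (by linarith) ht.le (by linarith))
    linarith [mul_nonneg (sub_nonneg.2 hat) (sub_nonneg.2 hprod)]
  convert! mul_le_mul_of_nonneg_right hfactor
    (show 0 ≤ (b + i) * (c + i) / (1 + i) by positivity) using 1 <;> field_simp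

theorem tendsto_dixonTerm_atTop (b c : ℝ) (n : ℕ) :
    Tendsto (fun t => dixonTerm t b c n) atTop (𝓝 (0 ^ n)) := by
  have hinv (q : ℝ) : Tendsto (fun t : ℝ => (t + q)⁻¹) atTop (𝓝 0) :=
    tendsto_inv_atTop_zero.comp (tendsto_atTop_add_const_right _ q tendsto_id)
  have hfactor (i : ℕ) : Tendsto (fun t : ℝ => (t + i) * (b + i) * (c + i) /
      ((1 + i) * (1 + t - b + i) * (1 + t - c + i))) atTop (𝓝 0) := by
    have hlim := ((hinv (1 - b + i)).mul
      (((hinv (1 - c + i)).const_mul (c - 1)).const_add 1)).mul_const ((b + i) * (c + i) / (1 + i))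
    rw [zero_mul, zero_mul] at hlim
    refine hlim.congr' ?_
    filter_upwards [eventually_gt_atTop (c - 1 - i)] with t ht
    have hne : t + (1 - c + i) ≠ 0 := by linarith
    rw [show 1 + t - b + i = t + (1 - b + i) by ring, show 1 + t - c + i = t + (1 - c + i) by ring,
      show t + (i : ℝ) = t + (1 - c + i) + (c - 1) by ring]
    field_simp
  simpa only [dixonTerm, prod_const, card_range] using
    tendsto_finsetProd (range n) fun i _ => hfactor i

theorem tendsto_tsum_dixonTerm_atTop (hb : 0 < b) (hc : 0 < c) :
    Tendsto (fun t => ∑' n, dixonTerm t b c n) atTop (𝓝 1) := by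
  have hbc := mul_pos hb hc
  set a := 1 + 2 * b + 2 * c + b * c
  have ha : 1 ≤ a := by linarith
  have ha' : 0 < a := by linarith
  rw [← show ∑' n : ℕ, (0 : ℝ) ^ n = 1 by simp [tsum_geometric_of_lt_one]]
  refine tendsto_tsum_of_dominated_convergence
    (summable_dixonTerm (a := a) ha' hb hc (by linarith))
    (tendsto_dixonTerm_atTop b c) ?_
  filter_upwards [eventually_ge_atTop a] with t hat n
  rw [Real.norm_of_nonneg
    (dixonTerm_pos (by linarith) hb hc (by linarith) (by linarith) n).le]
  refine dixonTerm_le_dixonTerm ha' hat hb hc (by linarith) (by linarith) ?_ n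
  linarith [mul_le_mul ha hat ha'.le ha'.le]

theorem hasSum_dixonTerm (ha : 0 < a) (hb : 0 < b) (hc : 0 < c) (h : b + c < 1 + a / 2) :
    HasSum (dixonTerm a b c) (dixonValue a b c) := by
  have hshift : Tendsto (fun N : ℕ => a + 2 * (N : ℝ)) atTop atTop :=
    tendsto_atTop_add_const_left _ _ (tendsto_natCast_atTop_atTop.const_mul_atTop two_pos)
  have hlim := ((tendsto_tsum_dixonTerm_atTop hb hc).comp hshift).div
    (tendsto_dixonValue_add_two_mul ha hb hc h) one_ne_zero
  have hconst : (∑' n, dixonTerm a b c n) / dixonValue a b c = 1 / 1 :=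
    tendsto_nhds_unique (tendsto_const_nhds.congr fun N =>
      (tsum_dixonTerm_div_dixonValue_add_two_mul ha hb hc h N).symm) hlim
  rw [one_div_one, div_eq_one_iff_eq (dixonValue_pos ha hb hc h).ne'] at hconst
  exact hconst ▸ (summable_dixonTerm ha hb hc h).hasSum

end Dixon

section DirichletEta

open Filter Finset
open scoped Topology

/-- The Dirichlet eta value `η(n) = ∑ (-1)^(m-1) / m^n`. Consecutive terms are grouped in pairs, so
that the series converges unconditionally for `n = 1` as well. -/
noncomputable def dirichletEta (n : ℕ) : ℝ :=
  ∑' i : ℕ, (1 / (2 * (i : ℝ) + 1) ^ n - 1 / (2 * (i : ℝ) + 2) ^ n)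

theorem dirichletEta_term_nonneg (n i : ℕ) :
    (0 : ℝ) ≤ 1 / (2 * (i : ℝ) + 1) ^ n - 1 / (2 * (i : ℝ) + 2) ^ n :=
  sub_nonneg.2 (by gcongr; norm_num)

theorem sum_range_inv_odd_sub_inv_even (n : ℕ) :
    ∑ i ∈ range n, (1 / (2 * (i : ℝ) + 1) - 1 / (2 * (i : ℝ) + 2)) =
      harmonic (2 * n) - harmonic n := by
  induction n with
  | zero => simp
  | succ n ih =>
    rw [sum_range_succ, ih, mul_add_one, harmonic_succ, harmonic_succ, harmonic_succ]
    push_cast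
    field_simp
    ring

theorem dirichletEta_one : dirichletEta 1 = Real.log 2 := by
  refine ((hasSum_iff_tendsto_nat_of_nonneg (dirichletEta_term_nonneg 1) _).2 ?_).tsum_eq
  have hlim := ((Real.tendsto_harmonic_sub_log.comp (tendsto_id.const_mul_atTop' two_pos)).sub
    Real.tendsto_harmonic_sub_log).add_const (Real.log 2)
  rw [sub_self, zero_add] at hlim
  refine hlim.congr' ?_
  filter_upwards [eventually_gt_atTop 0] with n hn
  have hn' : (n : ℝ) ≠ 0 := by positivity
  simp only [pow_one, sum_range_inv_odd_sub_inv_even, Function.comp_apply, id, Nat.cast_mul,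
    Nat.cast_ofNat, Real.log_mul two_ne_zero hn']
  ring

theorem hasSum_tval {n : ℕ} (hn : 2 ≤ n) :
    HasSum (fun i : ℕ => 1 / (2 * (i : ℝ) + 1) ^ n) (tval n) := by
  have hinj : Function.Injective fun i : ℕ => 2 * i + 1 := fun i j h => by simpa using h
  have hsum := (Real.summable_one_div_nat_pow.2 hn).comp_injective hinj
  exact Summable.hasSum (by simpa [Function.comp_def] using hsum)

theorem dirichletEta_eq_mul_tval {n : ℕ} (hn : 2 ≤ n) :
    dirichletEta n = 2 * (2 ^ (n - 1) - 1) / (2 ^ n - 1) * tval n := by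
  set Z : ℝ := ∑' i : ℕ, 1 / ((i : ℝ) + 1) ^ n
  have hZ : HasSum (fun i : ℕ => 1 / ((i : ℝ) + 1) ^ n) Z := by
    have hsum := (summable_nat_add_iff 1).2 (Real.summable_one_div_nat_pow.2 hn)
    exact Summable.hasSum (by simpa using hsum)
  have heven : HasSum (fun i : ℕ => 1 / (2 * (i : ℝ) + 2) ^ n) (Z / 2 ^ n) := by
    refine (hZ.div_const _).congr_fun fun i => ?_
    rw [← mul_add_one, mul_pow, mul_comm, div_div]
  have hsplit : Z = tval n + Z / 2 ^ n := by
    refine hZ.unique (HasSum.even_add_odd ?_ ?_)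
    · simpa using hasSum_tval hn
    · simpa [add_assoc, one_add_one_eq_two] using heven
  have hpow : (2 : ℝ) ^ n = 2 * 2 ^ (n - 1) := by rw [← pow_succ', Nat.sub_add_cancel (by omega)]
  have hlt : (1 : ℝ) < 2 ^ n := one_lt_pow₀ one_lt_two (by omega)
  have hne : (2 : ℝ) ^ n - 1 ≠ 0 := by linarith
  rw [dirichletEta, ((hasSum_tval hn).sub heven).tsum_eq]
  field_simp at hsplit ⊢
  linear_combination tval n * 2 ^ n * hpow - hsplit

theorem hasSum_log_one_sub_div_one_sub {x p q : ℝ} (hp : 0 < p) (hq : 0 < q) (hxp : |x| < p)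
    (hxq : |x| < q) :
    HasSum (fun n : ℕ => x ^ (n + 1) / (n + 1) * (1 / p ^ (n + 1) - 1 / q ^ (n + 1)))
      (Real.log ((1 - x / q) / (1 - x / p))) := by
  have hlt {t : ℝ} (ht : 0 < t) (hxt : |x| < t) : |x / t| < 1 := by
    rwa [abs_div, abs_of_pos ht, div_lt_one ht]
  have hne {t : ℝ} (ht : 0 < t) (hxt : |x| < t) : 1 - x / t ≠ 0 :=
    (sub_pos.2 (abs_lt.1 (hlt ht hxt)).2).ne'
  have hsum := (Real.hasSum_pow_div_log_of_abs_lt_one (hlt hp hxp)).sub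
    (Real.hasSum_pow_div_log_of_abs_lt_one (hlt hq hxq))
  rw [Real.log_div (hne hq hxq) (hne hp hxp)]
  convert! hsum using 1
  · ext n
    simp only [div_pow]
    ring
  · ring

theorem hasSum_log_Gamma_div {x : ℝ} (h0 : 0 ≤ x) (h1 : x < 1) :
    HasSum (fun i : ℕ => Real.log ((1 - x / (2 * i + 2)) / (1 - x / (2 * i + 1))))
      (Real.log (Real.Gamma ((1 - x) / 2) / (√Real.pi * Real.Gamma (1 - x / 2)))) := by
  have hpos (i : ℕ) : 0 < 2 * (i : ℝ) + 1 - x := by linarith [i.cast_nonneg (α := ℝ)]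
  have hquot (i : ℕ) : (1 - x / (2 * i + 2)) / (1 - x / (2 * i + 1)) =
      (1 - x / 2 + i) * (1 / 2 + i) / ((1 + i) * ((1 - x) / 2 + i)) := by
    have := hpos i
    have hden : (1 - x) / 2 + i = (2 * i + 1 - x) / 2 := by ring
    rw [one_sub_div (by positivity), one_sub_div (by positivity), hden]
    field_simp
    ring
  have hone (i : ℕ) : 1 ≤ (1 - x / (2 * i + 2)) / (1 - x / (2 * i + 1)) := by
    rw [one_le_div (by rw [sub_pos, div_lt_one (by positivity)]; linarith [hpos i])]
    gcongr
    norm_num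
  have hlim := (tendsto_prod_range_mul_div_mul (p := 1 - x / 2) (q := 1 / 2) (r := 1)
    (s := (1 - x) / 2) (by linarith) (by norm_num) one_pos (by linarith) (by ring))
  rw [Real.Gamma_one, one_mul, Real.Gamma_one_half_eq, mul_comm _ √Real.pi] at hlim
  have hG : 0 < Real.Gamma ((1 - x) / 2) / (√Real.pi * Real.Gamma (1 - x / 2)) := by
    have := Real.Gamma_pos_of_pos (show 0 < (1 - x) / 2 by linarith)
    have := Real.Gamma_pos_of_pos (show 0 < 1 - x / 2 by linarith)
    positivity
  refine (hasSum_iff_tendsto_nat_of_nonneg (fun i => Real.log_nonneg (hone i)) _).2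
    ((hlim.log hG.ne').congr fun n => ?_)
  simp only [← hquot]
  exact Real.log_prod fun i _ => (zero_lt_one.trans_le (hone i)).ne'

theorem hasSum_dirichletEta_mul_pow {x : ℝ} (h0 : 0 ≤ x) (h1 : x < 1) :
    HasSum (fun n : ℕ => x ^ (n + 1) / (n + 1) * dirichletEta (n + 1))
      (Real.log (Real.Gamma ((1 - x) / 2) / (√Real.pi * Real.Gamma (1 - x / 2)))) := by
  have hlt (i : ℕ) {t : ℝ} (ht : 1 ≤ t) : |x| < 2 * i + t := by
    rw [abs_of_nonneg h0]
    linarith [i.cast_nonneg (α := ℝ)]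
  have hswap := hasSum_tsum_comm_of_nonneg
    (fun n i => mul_nonneg (by positivity) (dirichletEta_term_nonneg (n + 1) i))
    (fun i => hasSum_log_one_sub_div_one_sub (by positivity) (by positivity)
      (hlt i le_rfl) (hlt i one_le_two))
    (hasSum_log_Gamma_div h0 h1)
  simpa only [tsum_mul_left, dirichletEta] using hswap

end DirichletEta

section OddReciprocals

/-- The reciprocal of the `j`-th odd number. With these weights nested sums are truncated multiple
`t`-values. -/
noncomputable def oddInv (j : ℕ) : ℝ := 1 / (2 * (j : ℝ) + 1)

theorem oddInv_nonneg : 0 ≤ oddInv := fun j => by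
  dsimp only [oddInv, Pi.zero_apply]
  positivity

theorem oddInv_le_inv_succ (j : ℕ) : oddInv j ≤ 1 / ((j : ℝ) + 1) := by
  unfold oddInv
  gcongr
  linarith [j.cast_nonneg (α := ℝ)]

theorem oddInv_le_one : oddInv ≤ 1 := fun j =>
  (oddInv_le_inv_succ j).trans (by simpa using Nat.one_div_le_one_div (α := ℝ) j.zero_le)

end OddReciprocals

section Specialization

open Finset

theorem prod_oddInv_eq_dixonTerm {x : ℝ} (hx : x < 1) (j : ℕ) :
    oddInv j ^ 2 / (1 - oddInv j * x) *
      ∏ i ∈ range j, (1 + 2 * (oddInv i * x / (1 - oddInv i * x))) =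
        dixonTerm 1 (1 / 2) ((1 + x) / 2) j / (1 - x) := by
  have hfactor (i : ℕ) : 1 - oddInv i * x = (2 * i + 1 - x) / (2 * i + 1) := by
    rw [oddInv]
    field_simp
  have hpos (i : ℕ) : 0 < 2 * (i : ℝ) + 1 - x := by linarith [i.cast_nonneg (α := ℝ)]
  simp only [hfactor]
  simp only [oddInv]
  induction j with
  | zero => simp [dixonTerm]
  | succ j ih =>
    have := hpos j
    have := hpos (j + 1)
    have hden : 1 + 1 - (1 + x) / 2 + j = (2 * (j + 1 : ℕ) + 1 - x) / 2 := by push_cast; ring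
    rw [dixonTerm_succ, hden, mul_div_right_comm, ← ih, prod_range_succ]
    push_cast at *
    field_simp
    ring

theorem dixonValue_one_half {x : ℝ} (hx : x < 1) :
    dixonValue 1 (1 / 2) ((1 + x) / 2) / (1 - x) =
      Real.pi / 8 * (Real.Gamma ((1 - x) / 2) / Real.Gamma (1 - x / 2)) ^ 2 := by
  have h1 : Real.Gamma (3 / 2) = √Real.pi / 2 := by
    rw [show (3 / 2 : ℝ) = 1 / 2 + 1 by norm_num, Real.Gamma_add_one (by norm_num),
      Real.Gamma_one_half_eq]
    ring
  have h2 : Real.Gamma ((3 - x) / 2) = (1 - x) / 2 * Real.Gamma ((1 - x) / 2) := by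
    rw [← Real.Gamma_add_one (by linarith)]
    ring_nf
  have h3 : 1 - x ≠ 0 := by linarith
  rw [dixonValue, gaussValue, gaussValue, show (1 : ℝ) + 1 / 2 = 3 / 2 by norm_num,
    show 3 / 2 - 1 / 2 - (1 + x) / 2 = (1 - x) / 2 by ring,
    show 1 + 1 - (1 / 2 : ℝ) = 3 / 2 by norm_num, show 1 + 1 - (1 + x) / 2 = (3 - x) / 2 by ring,
    show 3 / 2 - (1 / 2 : ℝ) = 1 by norm_num, show 3 / 2 - (1 + x) / 2 = 1 - x / 2 by ring,
    one_add_one_eq_two, Real.Gamma_two, Real.Gamma_one, h1, h2]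
  field_simp
  rw [Real.sq_sqrt Real.pi_nonneg]
  ring

theorem hasSum_prod_oddInv {x : ℝ} (h0 : -1 < x) (h1 : x < 1) :
    HasSum (fun j => oddInv j ^ 2 / (1 - oddInv j * x) *
      ∏ i ∈ range j, (1 + 2 * (oddInv i * x / (1 - oddInv i * x))))
      (Real.pi / 8 * (Real.Gamma ((1 - x) / 2) / Real.Gamma (1 - x / 2)) ^ 2) := by
  rw [← dixonValue_one_half h1]
  simp only [prod_oddInv_eq_dixonTerm h1]
  exact (hasSum_dixonTerm one_pos one_half_pos (by linarith) (by linarith)).div_const _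

theorem tval_two : tval 2 = Real.pi ^ 2 / 8 := by
  have h := hasSum_prod_oddInv (x := 0) (by norm_num) one_pos
  simp only [mul_zero, zero_div, sub_zero, add_zero, div_one, prod_const_one, mul_one, oddInv,
    Real.Gamma_one_half_eq, Real.Gamma_one, div_pow, one_pow, Real.sq_sqrt Real.pi_nonneg] at h
  rw [(hasSum_tval le_rfl).unique h]
  ring

end Specialization

section ExplicitSum

theorem prod_map_ite_mul_pow (P : ℕ → Prop) [DecidablePred P] (g : ℕ → ℝ) (c x : ℝ)
    (L : List ℕ) :
    (L.map fun i => if P i then c * g i * x ^ i else 0).prod =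
      if ∀ i ∈ L, P i then c ^ L.length * (L.map g).prod * x ^ L.sum else 0 := by
  induction L with
  | nil => simp
  | cons a L ih =>
    simp only [List.map_cons, List.prod_cons, ih, List.forall_mem_cons, List.length_cons,
      List.sum_cons, ite_zero_mul_ite_zero]
    congr 1
    ring

/-- The factor contributed by `nⱼ = i` to a summand of `explicitSum`. -/
noncomputable def tvalFactor (i : ℕ) : ℝ :=
  ((2 : ℝ) ^ (i - 1) - 1) * tval i / ((i : ℝ) * ((2 : ℝ) ^ i - 1))

/-- The explicit right-hand side of the weighted sum formula in weight `k`. The pair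
`p = (n, [n₁, …, n_m])` runs over the summation range of the formula. -/
noncomputable def explicitSum (k : ℕ) : ℝ :=
  ∑' p : ℕ × List ℕ,
    if (∀ i ∈ p.2, 2 ≤ i) ∧ p.1 + p.2.sum + 2 = k then
      (2 : ℝ) ^ (p.1 + 2 * p.2.length) / ((p.1.factorial : ℝ) * (p.2.length.factorial : ℝ)) *
        tval 2 * (Real.log 2) ^ p.1 * (p.2.map tvalFactor).prod
    else 0

theorem hasSum_tvalFactor_mul_pow {x : ℝ} (h0 : 0 ≤ x) (h1 : x < 1) :
    HasSum (fun i => if 2 ≤ i then 4 * tvalFactor i * x ^ i else 0)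
      (2 * Real.log (Real.Gamma ((1 - x) / 2) / (√Real.pi * Real.Gamma (1 - x / 2))) -
        2 * Real.log 2 * x) := by
  have heta := (hasSum_nat_add_iff' 1).2 ((hasSum_dirichletEta_mul_pow h0 h1).mul_left 2)
  rw [← hasSum_nat_add_iff' 2]
  convert! heta using 1
  · ext n
    rw [if_pos (by omega), dirichletEta_eq_mul_tval (by omega), tvalFactor, ← div_div]
    push_cast
    ring
  · simp [Finset.sum_range_succ, dirichletEta_one]
    ring

/-- The summand of `explicitSum` without the constraint on the weight. -/
noncomputable def explicitTerm (p : ℕ × List ℕ) : ℝ :=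
  if ∀ i ∈ p.2, 2 ≤ i then
    (2 : ℝ) ^ (p.1 + 2 * p.2.length) / ((p.1.factorial : ℝ) * (p.2.length.factorial : ℝ)) *
      tval 2 * (Real.log 2) ^ p.1 * (p.2.map tvalFactor).prod
  else 0

theorem explicitSum_add_two (c : ℕ) :
    explicitSum (c + 2) = ∑' p : ℕ × List ℕ, if p.1 + p.2.sum = c then explicitTerm p else 0 :=
  tsum_congr fun p => by simp only [explicitTerm, ← ite_and, Nat.add_right_cancel_iff, and_comm]

theorem explicitTerm_mul_pow (x : ℝ) (p : ℕ × List ℕ) :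
    explicitTerm p * x ^ (p.1 + p.2.sum) =
      tval 2 * ((2 * Real.log 2 * x) ^ p.1 / p.1.factorial *
        ((p.2.map fun i => if 2 ≤ i then 4 * tvalFactor i * x ^ i else 0).prod /
          p.2.length.factorial)) := by
  rw [prod_map_ite_mul_pow, explicitTerm]
  split_ifs
  · rw [pow_add, pow_mul, mul_pow, mul_pow, pow_add x]
    norm_num
    field_simp
  · simp

theorem hasSum_explicitTerm_mul_pow {x : ℝ} (h0 : 0 ≤ x) (h1 : x < 1) :
    HasSum (fun p => explicitTerm p * x ^ (p.1 + p.2.sum))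
      (Real.pi / 8 * (Real.Gamma ((1 - x) / 2) / Real.Gamma (1 - x / 2)) ^ 2) := by
  set Q := Real.Gamma ((1 - x) / 2) / (√Real.pi * Real.Gamma (1 - x / 2)) with hQ
  have hQpos : 0 < Q := by
    have := Real.Gamma_pos_of_pos (show 0 < (1 - x) / 2 by linarith)
    have := Real.Gamma_pos_of_pos (show 0 < 1 - x / 2 by linarith)
    positivity
  have hexp : HasSum (fun n : ℕ => (2 * Real.log 2 * x) ^ n / n.factorial)
      (Real.exp (2 * Real.log 2 * x)) :=
    Real.exp_eq_exp_ℝ ▸ NormedSpace.expSeries_div_hasSum_exp _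
  have hlist := hasSum_list_prod_div_factorial (hasSum_tvalFactor_mul_pow h0 h1)
  have hprod := (hexp.mul hlist (summable_mul_of_summable_norm
    (f := fun n : ℕ => (2 * Real.log 2 * x) ^ n / n.factorial)
    (g := fun L : List ℕ => (L.map fun i => if 2 ≤ i then 4 * tvalFactor i * x ^ i else 0).prod /
      L.length.factorial) hexp.summable.norm hlist.summable.norm)).mul_left (tval 2)
  have hvalue : tval 2 * (Real.exp (2 * Real.log 2 * x) *
      Real.exp (2 * Real.log Q - 2 * Real.log 2 * x)) =
        Real.pi / 8 * (Real.Gamma ((1 - x) / 2) / Real.Gamma (1 - x / 2)) ^ 2 := by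
    rw [← Real.exp_add, add_sub_cancel, two_mul, Real.exp_add, Real.exp_log hQpos, tval_two, hQ,
      div_mul_div_comm, mul_mul_mul_comm, Real.mul_self_sqrt Real.pi_nonneg]
    field_simp
  rw [← hvalue]
  exact hprod.congr_fun (explicitTerm_mul_pow x)

theorem hasSum_explicitSum_mul_pow {x : ℝ} (h0 : 0 ≤ x) (h1 : x < 1) :
    HasSum (fun c => explicitSum (c + 2) * x ^ c)
      (Real.pi / 8 * (Real.Gamma ((1 - x) / 2) / Real.Gamma (1 - x / 2)) ^ 2) := by
  simpa only [explicitSum_add_two] using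
    hasSum_tsum_ite_mul_pow (hasSum_explicitTerm_mul_pow h0 h1)

end ExplicitSum

section Compositions

open Finset

/-- The compositions of `p`, as the finset of lists of positive integers with sum `p`. -/
def compositionLists (p : ℕ) : Finset (List ℕ) :=
  (univ : Finset (Composition p)).image Composition.blocks

theorem mem_compositionLists {p : ℕ} {K : List ℕ} :
    K ∈ compositionLists p ↔ (∀ i ∈ K, 1 ≤ i) ∧ K.sum = p := by
  simp only [compositionLists, mem_image, mem_univ, true_and]
  constructor
  · rintro ⟨c, rfl⟩
    exact ⟨fun i => c.one_le_blocks, c.blocks_sum⟩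
  · rintro ⟨hpos, hsum⟩
    exact ⟨⟨K, fun {i} => hpos i, hsum⟩, rfl⟩

theorem compositionLists_zero : compositionLists 0 = {[]} := by
  ext K
  rw [mem_compositionLists, mem_singleton]
  constructor
  · rintro ⟨hpos, hsum⟩
    refine List.eq_nil_iff_forall_not_mem.2 fun i hi => ?_
    have := hpos i hi
    have := List.sum_eq_zero_iff.1 hsum i hi
    omega
  · rintro rfl
    simp

theorem sum_compositionLists_succ {R : Type*} [AddCommMonoid R] (f : List ℕ → R) (p : ℕ) :
    ∑ K ∈ compositionLists (p + 1), f K =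
      ∑ q ∈ antidiagonal p, ∑ K ∈ compositionLists q.2, f ((q.1 + 1) :: K) := by
  rw [sum_sigma']
  refine (sum_bij (fun s _ => (s.1.1 + 1) :: s.2) ?_ ?_ ?_ fun _ _ => rfl).symm
  · rintro ⟨⟨k, q⟩, K⟩ h
    simp only [mem_sigma, HasAntidiagonal.mem_antidiagonal, mem_compositionLists] at h
    simp only [mem_compositionLists, List.forall_mem_cons, List.sum_cons]
    exact ⟨⟨by omega, h.2.1⟩, by omega⟩
  · rintro ⟨⟨k, q⟩, K⟩ h ⟨⟨k', q'⟩, K'⟩ h' heq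
    simp only [mem_sigma, HasAntidiagonal.mem_antidiagonal, mem_compositionLists] at h h'
    simp only [List.cons.injEq, Nat.add_right_cancel_iff] at heq
    obtain ⟨rfl, rfl⟩ := heq
    obtain rfl : q = q' := by omega
    rfl
  · intro K hK
    rw [mem_compositionLists] at hK
    obtain - | ⟨k, K⟩ := K
    · simp at hK
    simp only [List.forall_mem_cons, List.sum_cons] at hK
    refine ⟨⟨(k - 1, K.sum), K⟩, ?_, ?_⟩
    · simp only [mem_sigma, HasAntidiagonal.mem_antidiagonal, mem_compositionLists]
      exact ⟨by omega, hK.1.2, trivial⟩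
    · simp only [List.cons.injEq, and_true]
      omega

theorem sum_pow_mul_tsum_admissible (τ : List ℕ → ℝ) (w : ℝ) (p : ℕ) :
    ∑ n ∈ range (p + 1), w ^ n * ∑' K : List ℕ,
      (if Admissible K ∧ K.sum = p + 2 ∧ K.length = n + 1 then τ K else 0) =
      ∑ q ∈ antidiagonal p, ∑ K ∈ compositionLists q.2, w ^ K.length * τ ((q.1 + 2) :: K) := by
  have hfin (n : ℕ) : ∑' K : List ℕ,
      (if Admissible K ∧ K.sum = p + 2 ∧ K.length = n + 1 then τ K else 0) =
      ∑ K ∈ compositionLists (p + 2), if 2 ≤ K.headI ∧ K.length = n + 1 then τ K else 0 := by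
    rw [tsum_eq_sum fun K hK => if_neg fun h => hK (mem_compositionLists.2 ⟨h.1.1, h.2.1⟩)]
    refine sum_congr rfl fun K hK => ?_
    rw [mem_compositionLists] at hK
    simp only [Admissible, hK.2, eq_true hK.1, true_and]
  simp only [hfin, mul_sum]
  rw [sum_comm, sum_compositionLists_succ, Nat.sum_antidiagonal_succ]
  simp only [List.headI_cons, List.length_cons, Nat.add_right_cancel_iff]
  rw [sum_eq_zero (by simp), zero_add]
  refine sum_congr rfl fun q hq => sum_congr rfl fun K hK => ?_
  have hlen : K.length ≤ K.sum :=
    List.length_le_sum_of_one_le K (mem_compositionLists.1 hK).1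
  rw [HasAntidiagonal.mem_antidiagonal] at hq
  rw [mem_compositionLists] at hK
  rw [sum_eq_single_of_mem K.length (mem_range.2 (by omega)) fun n _ hn =>
    by rw [if_neg fun h => hn h.2.symm, mul_zero]]
  simp

end Compositions

section NestedSums

open Finset

/-- The nested sum `∑ c(j₁)^k₁ ⋯ c(jₙ)^kₙ` over `M > j₁` and `jᵢ + δ > jᵢ₊₁`. Strict nesting is
`δ = 0`, weak nesting is `δ = 1`. -/
def nestedSum (c : ℕ → ℝ) (δ : ℕ) : List ℕ → ℕ → ℝ
  | [], _ => 1
  | k :: K, M => ∑ j ∈ range M, c j ^ k * nestedSum c δ K (j + δ)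

/-- The sum of `w ^ depth` times the nested sums below `M` over all indices of weight `p`. -/
def weightedNestedSum (c : ℕ → ℝ) (δ : ℕ) (w : ℝ) (M p : ℕ) : ℝ :=
  ∑ K ∈ compositionLists p, w ^ K.length * nestedSum c δ K M

/-- The part of `weightedNestedSum c δ w _ (p + 1)` in which the outermost summation variable
is `j`, divided by `w`. -/
def weightedNestedTerm (c : ℕ → ℝ) (δ : ℕ) (w : ℝ) (j p : ℕ) : ℝ :=
  ∑ q ∈ antidiagonal p, c j ^ (q.1 + 1) * weightedNestedSum c δ w (j + δ) q.2

variable (c : ℕ → ℝ) (δ : ℕ) (w : ℝ)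

theorem weightedNestedSum_zero (M : ℕ) : weightedNestedSum c δ w M 0 = 1 := by
  simp [weightedNestedSum, compositionLists_zero, nestedSum]

theorem weightedNestedSum_succ (M p : ℕ) :
    weightedNestedSum c δ w M (p + 1) = w * ∑ j ∈ range M, weightedNestedTerm c δ w j p := by
  simp only [weightedNestedSum, weightedNestedTerm, sum_compositionLists_succ, nestedSum, mul_sum,
    List.length_cons]
  rw [sum_comm (s := range M)]
  refine sum_congr rfl fun q _ => ?_
  rw [sum_comm (s := range M)]
  refine sum_congr rfl fun K _ => sum_congr rfl fun j _ => ?_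
  ring

theorem weightedNestedTerm_zero (j : ℕ) : weightedNestedTerm c δ w j 0 = c j := by
  simp [weightedNestedTerm, weightedNestedSum_zero]

theorem weightedNestedTerm_succ (j p : ℕ) :
    weightedNestedTerm c δ w j (p + 1) =
      c j * (weightedNestedSum c δ w (j + δ) (p + 1) + weightedNestedTerm c δ w j p) := by
  rw [weightedNestedTerm, Nat.sum_antidiagonal_succ, weightedNestedTerm, mul_add, mul_sum]
  simp only [zero_add, pow_one, pow_succ' _ (_ + 1), mul_assoc]

theorem weightedNestedSum_succ_right_succ (M p : ℕ) :
    weightedNestedSum c δ w (M + 1) (p + 1) =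
      weightedNestedSum c δ w M (p + 1) + w * weightedNestedTerm c δ w M p := by
  rw [weightedNestedSum_succ, sum_range_succ, mul_add, ← weightedNestedSum_succ]

theorem weightedNestedTerm_one_neg_two (p : ℕ) (j : ℕ) :
    weightedNestedTerm c 1 (-2) j p = (-1) ^ p * weightedNestedTerm c 0 2 j p := by
  induction p generalizing j with
  | zero => simp [weightedNestedTerm_zero]
  | succ p ih =>
    have hsum : weightedNestedSum c 1 (-2) (j + 1) (p + 1) =
        (-1) ^ (p + 1) * weightedNestedSum c 0 2 (j + 1) (p + 1) := by
      simp only [weightedNestedSum_succ, ih, ← mul_sum]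
      ring
    rw [weightedNestedTerm_succ, weightedNestedTerm_succ, hsum, ih, add_zero,
      weightedNestedSum_succ_right_succ]
    ring

variable {c δ}

theorem hasSum_weightedNested_of_hasSum_nestedSum {τ : List ℕ → ℝ}
    (hτ : ∀ k K, 2 ≤ k → (∀ i ∈ K, 1 ≤ i) →
      HasSum (fun j => c j ^ k * nestedSum c δ K (j + δ)) (τ (k :: K))) (p : ℕ) :
    HasSum (fun j => c j * weightedNestedTerm c δ w j p)
      (∑ n ∈ range (p + 1), w ^ n * ∑' K : List ℕ,
        if Admissible K ∧ K.sum = p + 2 ∧ K.length = n + 1 then τ K else 0) := by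
  rw [sum_pow_mul_tsum_admissible]
  have hsum := hasSum_sum fun q (_ : q ∈ antidiagonal p) =>
    hasSum_sum fun K (hK : K ∈ compositionLists q.2) =>
      (hτ (q.1 + 2) K (by omega) (mem_compositionLists.1 hK).1).mul_left (w ^ K.length)
  refine hsum.congr_fun fun j => ?_
  simp only [weightedNestedTerm, weightedNestedSum, mul_sum]
  refine sum_congr rfl fun q _ => sum_congr rfl fun K _ => ?_
  ring

end NestedSums

section GeneratingFunctions

open Finset

theorem hasSum_sum_antidiagonal_mul {f g : ℕ → ℝ} {s t : ℝ} (hf : HasSum f s) (hg : HasSum g t) :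
    HasSum (fun n => ∑ q ∈ antidiagonal n, f q.1 * g q.2) (s * t) := by
  have hf' := hf.summable.norm
  have hg' := hg.summable.norm
  rw [← hf.tsum_eq, ← hg.tsum_eq,
    tsum_mul_tsum_eq_tsum_sum_antidiagonal_of_summable_norm hf' hg']
  exact (summable_norm_sum_mul_antidiagonal_of_summable_norm hf' hg').of_norm.hasSum

variable {c : ℕ → ℝ} {x : ℝ}

theorem hasSum_weightedNestedTerm_mul_pow {δ j : ℕ} {w s : ℝ} (hx : |c j * x| < 1)
    (hs : HasSum (fun p => weightedNestedSum c δ w (j + δ) p * x ^ p) s) :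
    HasSum (fun p => weightedNestedTerm c δ w j p * x ^ p) (c j / (1 - c j * x) * s) := by
  refine (hasSum_sum_antidiagonal_mul
    ((hasSum_geometric_of_abs_lt_one hx).mul_left (c j)) hs).congr_fun fun p => ?_
  rw [weightedNestedTerm, sum_mul]
  refine sum_congr rfl fun q hq => ?_
  rw [← HasAntidiagonal.mem_antidiagonal.1 hq]
  ring

theorem hasSum_weightedNestedSum_mul_pow (w : ℝ) {M : ℕ} (hx : ∀ j < M, |c j * x| < 1) :
    HasSum (fun p => weightedNestedSum c 0 w M p * x ^ p)
      (∏ j ∈ range M, (1 + w * (c j * x / (1 - c j * x)))) := by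
  induction M with
  | zero =>
    rw [← hasSum_nat_add_iff' 1]
    simp [weightedNestedSum_zero, weightedNestedSum_succ, hasSum_zero]
  | succ M ih =>
    specialize ih fun j hj => hx j (by omega)
    have hterm := hasSum_weightedNestedTerm_mul_pow (δ := 0) (hx M (by omega)) ih
    rw [← hasSum_nat_add_iff' 1] at ih ⊢
    convert! ih.add (hterm.mul_left (w * x)) using 1
    · ext p
      rw [weightedNestedSum_succ_right_succ]
      ring
    · simp only [prod_range_succ, sum_range_one, weightedNestedSum_zero]
      ring

theorem nestedSum_nonneg (hc : 0 ≤ c) (δ : ℕ) (K : List ℕ) (M : ℕ) : 0 ≤ nestedSum c δ K M := by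
  induction K generalizing M with
  | nil => exact zero_le_one
  | cons k K ih => exact sum_nonneg fun j _ => mul_nonneg (pow_nonneg (hc j) k) (ih _)

theorem weightedNestedTerm_nonneg (hc : 0 ≤ c) (δ : ℕ) {w : ℝ} (hw : 0 ≤ w) (j p : ℕ) :
    0 ≤ weightedNestedTerm c δ w j p :=
  sum_nonneg fun _ _ => mul_nonneg (pow_nonneg (hc j) _) <|
    sum_nonneg fun K _ => mul_nonneg (pow_nonneg hw _) (nestedSum_nonneg hc δ K _)

end GeneratingFunctions

section NestedTuples

open Finset

/-- The variables `j₁, …, jₙ` of a `nestedSum` satisfy `jᵢ + δ > jₗ` for all `i < l`. -/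
def IsNested (δ : ℕ) {n : ℕ} (v : Fin n → ℕ) : Prop :=
  ∀ i j, i < j → v j < v i + δ

instance (δ n : ℕ) : DecidablePred (IsNested δ (n := n)) := fun v =>
  inferInstanceAs (Decidable (∀ i j, i < j → v j < v i + δ))

theorem isNested_cons {δ n : ℕ} (a : ℕ) (v : Fin n → ℕ) :
    IsNested δ (Fin.cons a v : Fin (n + 1) → ℕ) ↔ (∀ i, v i < a + δ) ∧ IsNested δ v := by
  simp [IsNested, Fin.forall_fin_succ]

variable {c : ℕ → ℝ} {δ : ℕ}

/-- The head of the tuple carries an arbitrary weight `h`, so that the lemma covers both a bounded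
and an unbounded outermost variable. -/
theorem hasSum_nested_cons (hc : 0 ≤ c) {K : List ℕ} {h : ℕ → ℝ} (hh : 0 ≤ h) {s : ℝ}
    (htail : ∀ M, HasSum (fun v : Fin K.length → ℕ =>
      if (∀ i, v i < M) ∧ IsNested δ v then ∏ i, c (v i) ^ K.get i else 0) (nestedSum c δ K M))
    (hs : HasSum (fun j => h j * nestedSum c δ K (j + δ)) s) :
    HasSum (fun v : Fin (K.length + 1) → ℕ =>
      if IsNested δ v then h (v 0) * ∏ i, c (v i.succ) ^ K.get i else 0) s := by
  let e : ℕ × (Fin K.length → ℕ) ≃ (Fin (K.length + 1) → ℕ) := Fin.consEquiv fun _ => ℕ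
  have he (p : ℕ × (Fin K.length → ℕ)) : e p = Fin.cons p.1 p.2 := rfl
  rw [← e.hasSum_iff]
  have hprod := hasSum_prod_of_nonneg (f := fun p : ℕ × (Fin K.length → ℕ) =>
    h p.1 * if (∀ i, p.2 i < p.1 + δ) ∧ IsNested δ p.2 then ∏ i, c (p.2 i) ^ K.get i else 0)
    (fun p => mul_nonneg (hh _) ?_) (fun j => (htail (j + δ)).mul_left (h j)) hs
  · refine hprod.congr_fun fun p => ?_
    simp only [Function.comp_apply, he, isNested_cons, Fin.cons_zero, Fin.cons_succ, mul_ite,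
      mul_zero]
  · split_ifs
    · exact prod_nonneg fun i _ => pow_nonneg (hc _) _
    · exact le_rfl

theorem prod_pow_get_cons (k : ℕ) (K : List ℕ) (v : Fin (K.length + 1) → ℕ) :
    ∏ i, c (v i) ^ (k :: K).get i = c (v 0) ^ k * ∏ i, c (v i.succ) ^ K.get i :=
  Fin.prod_univ_succ _

theorem hasSum_nestedSum (hc : 0 ≤ c) (hδ : δ ≤ 1) (K : List ℕ) (M : ℕ) :
    HasSum (fun v : Fin K.length → ℕ =>
      if (∀ i, v i < M) ∧ IsNested δ v then ∏ i, c (v i) ^ K.get i else 0)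
      (nestedSum c δ K M) := by
  induction K generalizing M with
  | nil => simp [IsNested, nestedSum, hasSum_unique]
  | cons k K ih =>
    have hhead : HasSum (fun j => (if j < M then c j ^ k else 0) * nestedSum c δ K (j + δ))
        (nestedSum c δ (k :: K) M) := by
      rw [nestedSum, sum_congr rfl fun j hj =>
        show _ = (if j < M then c j ^ k else 0) * nestedSum c δ K (j + δ) by
          rw [if_pos (mem_range.1 hj)]]
      exact hasSum_sum_of_ne_finset_zero fun j hj => by rw [if_neg (by simpa using hj), zero_mul]
    refine (hasSum_nested_cons hc (fun j => ?_) ih hhead).congr_fun fun v => ?_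
    · dsimp only [Pi.zero_apply]
      split_ifs
      exacts [pow_nonneg (hc j) k, le_rfl]
    · have hbound (hv : IsNested δ v) : (∀ i, v i < M) ↔ v 0 < M :=
        ⟨fun hM => hM 0, fun hM => Fin.cases hM fun i => by have := hv 0 i.succ i.succ_pos; omega⟩
      by_cases hv : IsNested δ v <;>
        simp [hv, hbound, prod_pow_get_cons, -List.get_eq_getElem]

theorem hasSum_pow_mul_nestedSum (hc : 0 ≤ c) (hδ : δ ≤ 1) {k : ℕ} {K : List ℕ}
    (hs : Summable fun j => c j ^ k * nestedSum c δ K (j + δ)) :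
    HasSum (fun j => c j ^ k * nestedSum c δ K (j + δ))
      (∑' v : Fin (k :: K).length → ℕ,
        if IsNested δ v then ∏ i, c (v i) ^ (k :: K).get i else 0) := by
  have htuple := hasSum_nested_cons hc (fun j => pow_nonneg (hc j) k)
    (hasSum_nestedSum hc hδ K) hs.hasSum
  simp only [← prod_pow_get_cons] at htuple
  convert! hs.hasSum using 1
  exact htuple.tsum_eq

theorem nestedSum_le_pow (hc : 0 ≤ c) (hc' : c ≤ 1) (hδ : δ ≤ 1) {K : List ℕ}
    (hK : ∀ i ∈ K, 1 ≤ i) (M : ℕ) :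
    nestedSum c δ K M ≤ (∑ j ∈ range M, c j) ^ K.length := by
  induction K generalizing M with
  | nil => simp [nestedSum]
  | cons k K ih =>
    rw [List.forall_mem_cons] at hK
    rw [nestedSum, List.length_cons, pow_succ', sum_mul]
    refine sum_le_sum fun j hj => ?_
    have hpow : c j ^ k ≤ c j := pow_le_of_le_one (hc j) (hc' j) (by omega)
    have hmono : ∑ i ∈ range (j + δ), c i ≤ ∑ i ∈ range M, c i :=
      sum_le_sum_of_subset_of_nonneg (range_mono (by rw [mem_range] at hj; omega))
        fun i _ _ => hc i
    have hsum : 0 ≤ ∑ i ∈ range (j + δ), c i := sum_nonneg fun i _ => hc i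
    exact mul_le_mul hpow ((ih hK.2 _).trans (by gcongr)) (nestedSum_nonneg hc δ K _) (hc j)

end NestedTuples

section MultipleTValues

open Finset

theorem sum_oddInv_le (j : ℕ) {ε : ℝ} (hε : 0 < ε) :
    ∑ i ∈ range (j + 1), oddInv i ≤ (1 + 1 / ε) * ((j : ℝ) + 1) ^ ε := by
  have hone : (1 : ℝ) ≤ (j : ℝ) + 1 := by linarith [j.cast_nonneg (α := ℝ)]
  calc ∑ i ∈ range (j + 1), oddInv i
      ≤ harmonic (j + 1) := by
        rw [harmonic]
        push_cast
        simpa using sum_le_sum fun i (_ : i ∈ range (j + 1)) => oddInv_le_inv_succ i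
    _ ≤ 1 + Real.log ((j : ℝ) + 1) := by exact_mod_cast harmonic_le_one_add_log (j + 1)
    _ ≤ ((j : ℝ) + 1) ^ ε + ((j : ℝ) + 1) ^ ε / ε :=
        add_le_add (Real.one_le_rpow hone hε.le) (Real.log_le_rpow_div (by positivity) hε)
    _ = (1 + 1 / ε) * ((j : ℝ) + 1) ^ ε := by ring

theorem nestedSum_oddInv_le {δ : ℕ} (hδ : δ ≤ 1) {K : List ℕ} (hK : ∀ i ∈ K, 1 ≤ i) (j : ℕ)
    {ε : ℝ} (hε : 0 < ε) :
    nestedSum oddInv δ K (j + δ) ≤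
      (1 + 1 / ε) ^ K.length * ((j : ℝ) + 1) ^ (ε * K.length) := by
  have hmono : ∑ i ∈ range (j + δ), oddInv i ≤ ∑ i ∈ range (j + 1), oddInv i :=
    sum_le_sum_of_subset_of_nonneg (range_mono (by omega)) fun i _ _ => oddInv_nonneg i
  calc nestedSum oddInv δ K (j + δ) ≤ (∑ i ∈ range (j + δ), oddInv i) ^ K.length :=
        nestedSum_le_pow oddInv_nonneg oddInv_le_one hδ hK _
    _ ≤ ((1 + 1 / ε) * ((j : ℝ) + 1) ^ ε) ^ K.length :=
        pow_le_pow_left₀ (sum_nonneg fun i _ => oddInv_nonneg i)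
          (hmono.trans (sum_oddInv_le j hε)) _
    _ = (1 + 1 / ε) ^ K.length * ((j : ℝ) + 1) ^ (ε * K.length) := by
        rw [mul_pow, Real.rpow_mul_natCast (by positivity)]

theorem oddInv_pow_le_rpow_neg_two {k : ℕ} (hk : 2 ≤ k) (j : ℕ) :
    oddInv j ^ k ≤ ((j : ℝ) + 1) ^ (-2 : ℝ) :=
  calc oddInv j ^ k ≤ oddInv j ^ 2 := pow_le_pow_of_le_one (oddInv_nonneg j) (oddInv_le_one j) hk
    _ ≤ (1 / ((j : ℝ) + 1)) ^ 2 := by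
      gcongr
      exacts [oddInv_nonneg j, oddInv_le_inv_succ j]
    _ = ((j : ℝ) + 1) ^ (-2 : ℝ) := by
      rw [Real.rpow_neg (by positivity), Real.rpow_two, one_div, inv_pow]

theorem summable_oddInv_pow_mul_nestedSum {δ : ℕ} (hδ : δ ≤ 1) {k : ℕ} (hk : 2 ≤ k) {K : List ℕ}
    (hK : ∀ i ∈ K, 1 ≤ i) :
    Summable fun j => oddInv j ^ k * nestedSum oddInv δ K (j + δ) := by
  set n := K.length with hn
  set ε : ℝ := 1 / (2 * (n + 1))
  have hε : 0 < ε := by positivity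
  have hεn : ε * n ≤ 1 / 2 := by
    rw [div_mul_eq_mul_div, div_le_div_iff₀ (by positivity) two_pos]
    linarith
  have hsum : Summable fun j : ℕ => ((j + 1 : ℕ) : ℝ) ^ (-(3 / 2) : ℝ) :=
    (summable_nat_add_iff 1).2 (Real.summable_nat_rpow.2 (by norm_num))
  refine Summable.of_nonneg_of_le (fun j => mul_nonneg (pow_nonneg (oddInv_nonneg j) k)
    (nestedSum_nonneg oddInv_nonneg δ K _)) (fun j => ?_) (hsum.mul_left ((1 + 1 / ε) ^ n))
  have hone : (1 : ℝ) ≤ (j : ℝ) + 1 := by linarith [j.cast_nonneg (α := ℝ)]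
  have hnested : nestedSum oddInv δ K (j + δ) ≤ (1 + 1 / ε) ^ n * ((j : ℝ) + 1) ^ (1 / 2 : ℝ) :=
    (nestedSum_oddInv_le hδ hK j hε).trans (by rw [← hn]; gcongr)
  calc oddInv j ^ k * nestedSum oddInv δ K (j + δ)
      ≤ ((j : ℝ) + 1) ^ (-2 : ℝ) * ((1 + 1 / ε) ^ n * ((j : ℝ) + 1) ^ (1 / 2 : ℝ)) :=
        mul_le_mul (oddInv_pow_le_rpow_neg_two hk j) hnested
          (nestedSum_nonneg oddInv_nonneg δ K _) (by positivity)
    _ = (1 + 1 / ε) ^ n * ((j + 1 : ℕ) : ℝ) ^ (-(3 / 2) : ℝ) := by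
        rw [mul_left_comm, ← Real.rpow_add (by positivity)]
        norm_num

theorem tsum_ite_odd {n : ℕ} (P : (Fin n → ℕ) → Prop) [DecidablePred P]
    (f : (Fin n → ℕ) → ℝ) :
    ∑' m, (if (∀ i, Odd (m i)) ∧ P m then f m else 0) =
      ∑' v : Fin n → ℕ, if P (fun i => 2 * v i + 1) then f (fun i => 2 * v i + 1) else 0 := by
  have hinj : Function.Injective fun (v : Fin n → ℕ) i => 2 * v i + 1 := fun v w h =>
    funext fun i => by simpa using congrFun h i
  rw [← hinj.tsum_eq]
  · simp
  · intro m hm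
    choose v hv using (ite_ne_right_iff.1 hm).1.1
    exact ⟨v, funext fun i => (hv i).symm⟩

theorem hasSum_multT {k : ℕ} (hk : 2 ≤ k) {K : List ℕ} (hK : ∀ i ∈ K, 1 ≤ i) :
    HasSum (fun j => oddInv j ^ k * nestedSum oddInv 0 K (j + 0)) (multT (k :: K)) := by
  convert! hasSum_pow_mul_nestedSum oddInv_nonneg zero_le_one
    (summable_oddInv_pow_mul_nestedSum zero_le_one hk hK) using 1
  rw [multT, tsum_ite_odd]
  simp [IsNested, oddInv]

theorem hasSum_multTStar {k : ℕ} (hk : 2 ≤ k) {K : List ℕ} (hK : ∀ i ∈ K, 1 ≤ i) :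
    HasSum (fun j => oddInv j ^ k * nestedSum oddInv 1 K (j + 1)) (multTStar (k :: K)) := by
  convert! hasSum_pow_mul_nestedSum oddInv_nonneg le_rfl
    (summable_oddInv_pow_mul_nestedSum le_rfl hk hK) using 1
  rw [multTStar, tsum_ite_odd]
  simp [IsNested, oddInv]

end MultipleTValues

section WeightedSums

open Finset Set

theorem hasSum_oddInv_mul_weightedNestedTerm (p : ℕ) :
    HasSum (fun j => oddInv j * weightedNestedTerm oddInv 0 2 j p)
      (∑ n ∈ Finset.range (p + 1), (2 : ℝ) ^ n * G0d (p + 2) (n + 1)) :=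
  hasSum_weightedNested_of_hasSum_nestedSum 2 (fun _ _ hk hK => hasSum_multT hk hK) p

theorem hasSum_oddInv_mul_weightedNestedTerm_star (p : ℕ) :
    HasSum (fun j => oddInv j * weightedNestedTerm oddInv 1 (-2) j p)
      (∑ n ∈ Finset.range (p + 1), (-2 : ℝ) ^ n * G0dStar (p + 2) (n + 1)) :=
  hasSum_weightedNested_of_hasSum_nestedSum (-2) (fun _ _ hk hK => hasSum_multTStar hk hK) p

theorem sum_G0d_eq_sum_G0dStar (p : ℕ) :
    ∑ n ∈ Finset.range (p + 1), (2 : ℝ) ^ n * G0d (p + 2) (n + 1) =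
      (-1) ^ p * ∑ n ∈ Finset.range (p + 1), (-2 : ℝ) ^ n * G0dStar (p + 2) (n + 1) := by
  refine (hasSum_oddInv_mul_weightedNestedTerm p).unique
    (((hasSum_oddInv_mul_weightedNestedTerm_star p).mul_left _).congr_fun fun j => ?_)
  have hsq : (-1 : ℝ) ^ p * (-1) ^ p = 1 := by rw [← mul_pow]; simp
  rw [weightedNestedTerm_one_neg_two]
  linear_combination -(oddInv j * weightedNestedTerm oddInv 0 2 j p) * hsq

theorem hasSum_sum_G0d_mul_pow {x : ℝ} (hx : x ∈ Ioo (0 : ℝ) 1) :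
    HasSum (fun p => (∑ n ∈ Finset.range (p + 1), (2 : ℝ) ^ n * G0d (p + 2) (n + 1)) * x ^ p)
      (Real.pi / 8 * (Real.Gamma ((1 - x) / 2) / Real.Gamma (1 - x / 2)) ^ 2) := by
  have hlt (j : ℕ) : |oddInv j * x| < 1 := by
    rw [abs_of_nonneg (mul_nonneg (oddInv_nonneg j) hx.1.le)]
    exact mul_lt_one_of_nonneg_of_lt_one_right (oddInv_le_one j) hx.1.le hx.2
  have hcol (j : ℕ) : HasSum (fun p => oddInv j * weightedNestedTerm oddInv 0 2 j p * x ^ p)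
      (oddInv j ^ 2 / (1 - oddInv j * x) *
        ∏ i ∈ Finset.range j, (1 + 2 * (oddInv i * x / (1 - oddInv i * x)))) := by
    have hterm := (hasSum_weightedNestedTerm_mul_pow (hlt j) (δ := 0)
      (hasSum_weightedNestedSum_mul_pow 2 fun i _ => hlt i)).mul_left (oddInv j)
    convert! hterm using 1
    · simp only [mul_assoc]
    · rw [add_zero, ← mul_assoc, mul_div_assoc', sq]
  have hswap := hasSum_tsum_comm_of_nonneg (fun p j => mul_nonneg (mul_nonneg (oddInv_nonneg j)
    (weightedNestedTerm_nonneg oddInv_nonneg 0 zero_le_two j p)) (pow_nonneg hx.1.le p)) hcol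
    (hasSum_prod_oddInv (by linarith [hx.1]) hx.2)
  simpa only [tsum_mul_right, (hasSum_oddInv_mul_weightedNestedTerm _).tsum_eq] using hswap

theorem sum_G0d_eq_explicitSum (p : ℕ) :
    ∑ n ∈ Finset.range (p + 1), (2 : ℝ) ^ n * G0d (p + 2) (n + 1) = explicitSum (p + 2) :=
  congrFun (eq_of_hasSum_mul_pow one_pos (fun _ => hasSum_sum_G0d_mul_pow)
    fun _ hx => hasSum_explicitSum_mul_pow hx.1.le hx.2) p

end WeightedSums

/-- Weighted sum formula (Corollary 2.6): for every `k ≥ 2`,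
`∑_{n=1}^{k-1} 2^{n-1} G₀(k,n) = ∑_{n=1}^{k-1} (-1)^{k-n-1} 2^{n-1} G₀*(k,n)` and both equal
the explicit sum over `n, m ≥ 0` and `n₁, …, n_m ≥ 2` with `n + n₁ + ⋯ + n_m = k - 2`. -/
theorem weighted_sum_formula (k : ℕ) (hk : 2 ≤ k) :
    (∑ n ∈ Finset.range (k - 1), (2 : ℝ) ^ n * G0d k (n + 1))
      = (∑ n ∈ Finset.range (k - 1),
          (-1 : ℝ) ^ (k - n - 2) * 2 ^ n * G0dStar k (n + 1)) ∧
    (∑ n ∈ Finset.range (k - 1), (2 : ℝ) ^ n * G0d k (n + 1))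
      = ∑' p : ℕ × List ℕ,
          if (∀ i ∈ p.2, 2 ≤ i) ∧ p.1 + p.2.sum + 2 = k then
            (2 : ℝ) ^ (p.1 + 2 * p.2.length) /
                ((p.1.factorial : ℝ) * (p.2.length.factorial : ℝ)) *
              tval 2 * (Real.log 2) ^ p.1 *
              (p.2.map fun i =>
                ((2 : ℝ) ^ (i - 1) - 1) * tval i / ((i : ℝ) * ((2 : ℝ) ^ i - 1))).prod
          else 0 := by
  obtain ⟨p, rfl⟩ := Nat.exists_eq_add_of_le' hk
  refine ⟨?_, sum_G0d_eq_explicitSum p⟩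
  rw [show p + 2 - 1 = p + 1 by omega, sum_G0d_eq_sum_G0dStar, Finset.mul_sum]
  refine Finset.sum_congr rfl fun n hn => ?_
  obtain ⟨m, rfl⟩ := Nat.exists_eq_add_of_le (Nat.lt_succ_iff.1 (Finset.mem_range.1 hn))
  rw [show n + m + 2 - n - 2 = m by omega, pow_add, neg_pow 2]
  have hsq : (-1 : ℝ) ^ n * (-1) ^ n = 1 := by rw [← mul_pow]; simp
  linear_combination (-1 : ℝ) ^ m * 2 ^ n * G0dStar (n + m + 2) (n + 1) * hsq
end

section
/- There exists δ > 0 such that for all real u, v with |u|, |v| < δ, ∑_{k > n ≥ 1} G_0^*(k,n) u^{k−n−1} v^{n−1} = (1/(1−u−v)) · ₃F₂((1−u)/2, 1/2, 1; (3−u−v)/2, 3/2; 1), the series converging absolutely. -/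
open scoped BigOperators

/-!
Group the sum by the largest summation variable `m` of `t*`, which is odd. For fixed `m` the index
splits freely into a head and a tail. The head contributes a geometric series with sum
`1 / (m (m - u))`. The tails contribute `F_N = ∑_L starSum L N` over all words `L`, where
`m = 2N - 1`; isolating the words whose first variable attains the bound gives the renewal equation
`F_{N+1} = F_N + v / (2N + 1 - u) F_{N+1}`, hence `F_N = ∏_{i < N} (1 - v / (2i + 1 - u))⁻¹`.
The resulting series over `m` is the `₃F₂` series term by term. Absolute convergence reduces to
nonnegative `u` and `v`, where the series over `m` is dominated by a telescoping one.
-/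

open scoped ENNReal NNReal

section SumsOverLists

variable {ι : Type*}

theorem hasSum_list {M : Type*} [AddCommMonoid M] [TopologicalSpace M] [ContinuousAdd M]
    {f : List ι → M} {a : M} (h : HasSum (fun p : ι × List ι ↦ f (p.1 :: p.2)) a) :
    HasSum f (f [] + a) := by
  have cons_injective : Function.Injective (fun p : ι × List ι ↦ p.1 :: p.2) := by
    rintro ⟨k, K⟩ ⟨l, L⟩ hkl
    simpa using hkl
  have isCompl : IsCompl {[]} (Set.range fun p : ι × List ι ↦ p.1 :: p.2) := by
    rw [← compl_eq_iff_isCompl]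
    ext (_ | ⟨k, K⟩) <;> simp
  exact HasSum.add_isCompl isCompl (hasSum_unique _) (cons_injective.hasSum_range_iff.2 h)

theorem tsum_list_ennreal (f : List ι → ℝ≥0∞) :
    ∑' K, f K = f [] + ∑' k, ∑' K, f (k :: K) := by
  rw [(hasSum_list ENNReal.summable.hasSum).tsum_eq, ENNReal.tsum_prod']

theorem one_add_mul_inv_one_sub_ennreal (y : ℝ≥0∞) : 1 + y * (1 - y)⁻¹ = (1 - y)⁻¹ := by
  rw [← ENNReal.tsum_geometric, ← ENNReal.tsum_mul_left,
    tsum_eq_zero_add' (f := fun n ↦ y ^ n) ENNReal.summable]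
  simp_rw [pow_succ', pow_zero]

theorem tsum_list_le_of_renewal {f g : List ι → ℝ≥0∞} {x : ι → ℝ≥0∞} (hnil : f [] ≤ g [])
    (hcons : ∀ k K, f (k :: K) ≤ g (k :: K) + x k * f K) :
    ∑' K, f K ≤ (1 - ∑' k, x k)⁻¹ * ∑' K, g K := by
  set y := ∑' k, x k
  set G := ∑' K, g K
  have truncated (Q : ℕ) : ∑' K : List ι, (if K.length < Q then f K else 0) ≤ (1 - y)⁻¹ * G := by
    induction Q with
    | zero => simp
    | succ Q ih =>
      calc ∑' K : List ι, (if K.length < Q + 1 then f K else 0)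
          = f [] + ∑' k, ∑' K : List ι, if K.length < Q then f (k :: K) else 0 := by
            rw [tsum_list_ennreal]; simp
        _ ≤ g [] + ∑' k, ∑' K : List ι,
              (g (k :: K) + x k * if K.length < Q then f K else 0) := by
            gcongr with k K
            split_ifs
            · exact hcons k K
            · exact zero_le
        _ = G + y * ∑' K : List ι, (if K.length < Q then f K else 0) := by
            simp_rw [ENNReal.tsum_add, ENNReal.tsum_mul_left, ENNReal.tsum_mul_right]
            rw [← add_assoc, ← tsum_list_ennreal]
        _ ≤ G + y * ((1 - y)⁻¹ * G) := by gcongr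
        _ = (1 - y)⁻¹ * G := by
            rw [← mul_assoc, ← one_add_mul, one_add_mul_inv_one_sub_ennreal]
  rw [ENNReal.tsum_eq_iSup_sum]
  refine iSup_le fun s ↦ ?_
  calc ∑ K ∈ s, f K
      = ∑ K ∈ s, (if K.length < s.sup List.length + 1 then f K else 0) :=
        Finset.sum_congr rfl fun K hK ↦
          (if_pos (Nat.lt_succ_of_le (Finset.le_sup (f := List.length) hK))).symm
    _ ≤ ∑' K : List ι, (if K.length < s.sup List.length + 1 then f K else 0) :=
        ENNReal.sum_le_tsum s
    _ ≤ (1 - y)⁻¹ * G := truncated _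

variable {𝕜 : Type*} [NormedField 𝕜]

theorem summable_norm_list_of_renewal {f g : List ι → 𝕜} {x : ι → 𝕜}
    (hnil : f [] = g []) (hcons : ∀ k K, f (k :: K) = g (k :: K) + x k * f K)
    (hx : Summable fun k ↦ ‖x k‖) (hx_lt : ∑' k, ‖x k‖ < 1) (hg : Summable fun K ↦ ‖g K‖) :
    Summable fun K ↦ ‖f K‖ := by
  have enorm_lt : ∑' k, ‖x k‖ₑ < 1 := by
    simp_rw [← ofReal_norm]
    rwa [← ENNReal.ofReal_tsum_of_nonneg (fun _ ↦ norm_nonneg _) hx, ENNReal.ofReal_lt_one]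
  rw [← tsum_enorm_ne_top_iff_summable_norm] at hg ⊢
  have bound : ∑' K, ‖f K‖ₑ ≤ (1 - ∑' k, ‖x k‖ₑ)⁻¹ * ∑' K, ‖g K‖ₑ :=
    tsum_list_le_of_renewal (by rw [hnil]) fun k K ↦ by
      rw [hcons, ← enorm_mul]; exact enorm_add_le _ _
  refine ne_top_of_le_ne_top (ENNReal.mul_ne_top ?_ hg) bound
  exact ENNReal.inv_ne_top.2 (tsub_pos_of_lt enorm_lt).ne'

theorem tsum_list_of_renewal [CompleteSpace 𝕜] {f g : List ι → 𝕜} {x : ι → 𝕜}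
    (hnil : f [] = g []) (hcons : ∀ k K, f (k :: K) = g (k :: K) + x k * f K)
    (hx : Summable fun k ↦ ‖x k‖) (hx_lt : ∑' k, ‖x k‖ < 1) (hg : Summable fun K ↦ ‖g K‖) :
    ∑' K, f K = (1 - ∑' k, x k)⁻¹ * ∑' K, g K := by
  have hf := summable_norm_list_of_renewal hnil hcons hx hx_lt hg
  have hxf : HasSum (fun p : ι × List ι ↦ x p.1 * f p.2) ((∑' k, x k) * ∑' K, f K) :=
    hx.of_norm.hasSum.mul hf.of_norm.hasSum (summable_mul_of_summable_norm hx hf)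
  have sub_shift : HasSum (fun K ↦ f K - g K) (0 + (∑' k, x k) * ∑' K, f K) := by
    rw [← sub_eq_zero.2 hnil]
    refine hasSum_list (f := fun K ↦ f K - g K) ?_
    simpa only [hcons, add_sub_cancel_left] using hxf
  have renewal : ∑' K, f K - ∑' K, g K = (∑' k, x k) * ∑' K, f K := by
    rw [← zero_add (_ * _), ← sub_shift.tsum_eq, hf.of_norm.tsum_sub hg.of_norm]
  have one_sub_ne_zero : 1 - ∑' k, x k ≠ 0 := fun h ↦
    ((norm_tsum_le_tsum_norm hx).trans_lt hx_lt).ne (by rw [← sub_eq_zero.1 h, norm_one])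
  rw [eq_inv_mul_iff_mul_eq₀ one_sub_ne_zero]
  linear_combination renewal

end SumsOverLists

section StarSum

variable {ι R : Type*} [Semiring R]

/-- The nested sum `∑ x k₁ j₁ ⋯ x kₙ jₙ` over `N > j₁ ≥ ⋯ ≥ jₙ ≥ 0` attached to the word
`[k₁, …, kₙ]`; for suitable `x` these are the truncations of multiple star values. -/
def starSum (x : ι → ℕ → R) : List ι → ℕ → R
  | [], _ => 1
  | k :: K, N => ∑ j ∈ Finset.range N, x k j * starSum x K (j + 1)

theorem starSum_cons_succ (x : ι → ℕ → R) (k : ι) (K : List ι) (N : ℕ) :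
    starSum x (k :: K) (N + 1) = starSum x (k :: K) N + x k N * starSum x K (N + 1) :=
  Finset.sum_range_succ _ N

theorem starSum_map {κ : Type*} (x : ι → ℕ → R) (e : κ → ι) (K : List κ) (N : ℕ) :
    starSum x (K.map e) N = starSum (fun k ↦ x (e k)) K N := by
  induction K generalizing N with
  | nil => rfl
  | cons k K ih => simp only [List.map_cons, starSum, ih]

theorem map_starSum {S : Type*} [Semiring S] (φ : R →+* S) (x : ι → ℕ → R) (K : List ι) (N : ℕ) :
    φ (starSum x K N) = starSum (fun k j ↦ φ (x k j)) K N := by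
  induction K generalizing N with
  | nil => exact map_one φ
  | cons k K ih => simp only [starSum, map_sum, map_mul, ih]

theorem starSum_mul_left {R : Type*} [CommSemiring R] (c : ι → R) (x : ι → ℕ → R) (K : List ι)
    (N : ℕ) : starSum (fun k j ↦ c k * x k j) K N = (K.map c).prod * starSum x K N := by
  induction K generalizing N with
  | nil => simp [starSum]
  | cons k K ih =>
    simp only [starSum, ih, List.map_cons, List.prod_cons, Finset.mul_sum]
    exact Finset.sum_congr rfl fun j _ ↦ by ring

theorem norm_starSum_le {𝕜 : Type*} [NormedField 𝕜] (x : ι → ℕ → 𝕜) (K : List ι) (N : ℕ) :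
    ‖starSum x K N‖ ≤ starSum (fun k j ↦ ‖x k j‖) K N := by
  induction K generalizing N with
  | nil => simp [starSum]
  | cons k K ih =>
    refine (norm_sum_le _ _).trans (Finset.sum_le_sum fun j _ ↦ ?_)
    rw [norm_mul]
    gcongr
    exact ih _

section Summation

variable {𝕜 : Type*} [NormedField 𝕜] {x : ι → ℕ → 𝕜}

theorem summable_norm_starSum (hx : ∀ j, Summable fun k ↦ ‖x k j‖)
    (hx_lt : ∀ j, ∑' k, ‖x k j‖ < 1) (N : ℕ) : Summable fun K ↦ ‖starSum x K N‖ := by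
  induction N with
  | zero => exact (hasSum_single [] fun K hK ↦ by cases K <;> simp_all [starSum]).summable
  | succ N ih =>
    exact summable_norm_list_of_renewal rfl (starSum_cons_succ x · · N) (hx N) (hx_lt N) ih

theorem tsum_starSum [CompleteSpace 𝕜] (hx : ∀ j, Summable fun k ↦ ‖x k j‖)
    (hx_lt : ∀ j, ∑' k, ‖x k j‖ < 1) (N : ℕ) :
    ∑' K, starSum x K N = ∏ j ∈ Finset.range N, (1 - ∑' k, x k j)⁻¹ := by
  induction N with
  | zero =>
    rw [tsum_eq_single [] fun K hK ↦ by cases K <;> simp_all [starSum]]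
    rfl
  | succ N ih =>
    rw [tsum_list_of_renewal (f := (starSum x · (N + 1))) rfl (starSum_cons_succ x · · N) (hx N)
      (hx_lt N) (summable_norm_starSum hx hx_lt N), ih, Finset.prod_range_succ_comm]

end Summation

theorem antitone_fin_cons {n : ℕ} (a : ℕ) (m : Fin n → ℕ) :
    Antitone (Fin.cons a m : Fin (n + 1) → ℕ) ↔ Antitone m ∧ ∀ i, m i < a + 1 := by
  simp [antitone_iff_forall_lt, Fin.forall_fin_succ, and_comm]

theorem tsum_antitone_fin_succ {n : ℕ} (h : (Fin (n + 1) → ℕ) → ℝ≥0∞) :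
    ∑' m, (if Antitone m then h m else 0) =
      ∑' j, ∑' m : Fin n → ℕ,
        if Antitone m ∧ ∀ i, m i < j + 1 then h (Fin.cons j m) else 0 := by
  rw [← (Fin.consEquiv fun _ ↦ ℕ).tsum_eq, ENNReal.tsum_prod']
  exact tsum_congr fun j ↦ tsum_congr fun m ↦ if_congr (antitone_fin_cons j m) rfl rfl

theorem prod_get_cons_fin_cons {R : Type*} [CommMonoid R] (x : ι → ℕ → R) (k : ι) (K : List ι)
    (j : ℕ) (m : Fin K.length → ℕ) :
    ∏ i, x ((k :: K).get i) ((Fin.cons j m : Fin (K.length + 1) → ℕ) i) =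
      x k j * ∏ i, x (K.get i) (m i) :=
  Fin.prod_univ_succ _

theorem tsum_antitone_lt_eq_starSum (x : ι → ℕ → ℝ≥0∞) (K : List ι) (N : ℕ) :
    ∑' m : Fin K.length → ℕ,
        (if Antitone m ∧ ∀ i, m i < N then ∏ i, x (K.get i) (m i) else 0) = starSum x K N := by
  induction K generalizing N with
  | nil =>
    refine (tsum_eq_single (Fin.elim0 : Fin 0 → ℕ) fun m hm ↦
      (hm (Subsingleton.elim _ _)).elim).trans ?_
    simp [starSum, Subsingleton.antitone]
  | cons k K ih =>
    have split_head (j : ℕ) (m : Fin K.length → ℕ) :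
        ((Antitone m ∧ ∀ i, m i < j + 1) ∧
            ∀ i : Fin (k :: K).length, (Fin.cons j m : Fin (K.length + 1) → ℕ) i < N) ↔
          j ∈ Finset.range N ∧ Antitone m ∧ ∀ i, m i < j + 1 := by
      simp only [List.length_cons, Fin.forall_fin_succ, Fin.cons_zero, Fin.cons_succ,
        Finset.mem_range]
      exact ⟨fun h ↦ ⟨h.2.1, h.1⟩, fun h ↦ ⟨h.2, h.1, fun i ↦ by have := h.2.2 i; omega⟩⟩
    simp only [ite_and (Antitone _)]
    refine (tsum_antitone_fin_succ _).trans ?_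
    simp only [← ite_and, split_head, prod_get_cons_fin_cons]
    rw [starSum, tsum_eq_sum (s := Finset.range N) fun j hj ↦ by simp [hj]]
    refine Finset.sum_congr rfl fun j hj ↦ ?_
    simp only [hj, true_and, ← ih, ← ENNReal.tsum_mul_left, mul_ite, mul_zero]

theorem tsum_antitone_cons_ennreal (x : ι → ℕ → ℝ≥0∞) (k : ι) (K : List ι) :
    ∑' m : Fin (k :: K).length → ℕ,
        (if Antitone m then ∏ i, x ((k :: K).get i) (m i) else 0) =
      ∑' j, x k j * starSum x K (j + 1) := by
  refine (tsum_antitone_fin_succ _).trans (tsum_congr fun j ↦ ?_)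
  simp only [prod_get_cons_fin_cons, ← tsum_antitone_lt_eq_starSum, ← ENNReal.tsum_mul_left,
    mul_ite, mul_zero]

theorem tsum_antitone_cons (x : ι → ℕ → ℝ≥0) (k : ι) (K : List ι) :
    ∑' m : Fin (k :: K).length → ℕ,
        (if Antitone m then ∏ i, x ((k :: K).get i) (m i) else 0) =
      ∑' j, x k j * starSum x K (j + 1) := by
  have coe_starSum (j : ℕ) :
      ((starSum x K (j + 1) : ℝ≥0) : ℝ≥0∞) = starSum (fun k j ↦ (x k j : ℝ≥0∞)) K (j + 1) :=
    map_starSum ENNReal.ofNNRealHom x K (j + 1)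
  rw [NNReal.tsum_eq_toNNReal_tsum, NNReal.tsum_eq_toNNReal_tsum]
  simp only [apply_ite ENNReal.ofNNReal, ENNReal.ofNNReal_finsetProd, ENNReal.coe_mul,
    ENNReal.coe_zero, coe_starSum]
  exact congrArg ENNReal.toNNReal (tsum_antitone_cons_ennreal (fun k j ↦ (x k j : ℝ≥0∞)) k K)

end StarSum

section MultTStar

/-- The letter `m ↦ m⁻ᵏ` of a multiple `t`-value at the odd number `m = 2j + 1`, so that the odd
positive integers are enumerated by `j : ℕ`. -/
def invOddPow (𝕜 : Type*) [Semifield 𝕜] (k j : ℕ) : 𝕜 := ((2 * j + 1) ^ k)⁻¹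

theorem map_invOddPow {𝕜 𝕝 : Type*} [Semifield 𝕜] [Semifield 𝕝] (φ : 𝕜 →+* 𝕝) (k j : ℕ) :
    φ (invOddPow 𝕜 k j) = invOddPow 𝕝 k j := by
  simp [invOddPow, map_ofNat φ 2]

theorem multTStar_eq_tsum_antitone (K : List ℕ) :
    multTStar K = ∑' m : Fin K.length → ℕ,
      if Antitone m then ∏ i, invOddPow ℝ (K.get i) (m i) else 0 := by
  have odd_injective : Function.Injective fun (j : Fin K.length → ℕ) i ↦ 2 * j i + 1 :=
    fun j j' h ↦ funext fun i ↦ by have := congrFun h i; lia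
  rw [multTStar, ← odd_injective.tsum_eq]
  · simp [antitone_iff_forall_lt, invOddPow]
  · intro m hm
    obtain ⟨odd, -⟩ := of_not_not fun h ↦ hm (if_neg h)
    choose j hj using odd
    exact ⟨j, funext fun i ↦ (hj i).symm⟩

theorem multTStar_cons (k : ℕ) (K : List ℕ) :
    multTStar (k :: K) = ∑' j, invOddPow ℝ k j * starSum (invOddPow ℝ) K (j + 1) := by
  have coe_invOddPow (k j : ℕ) : (invOddPow ℝ≥0 k j : ℝ) = invOddPow ℝ k j :=
    map_invOddPow NNReal.toRealHom k j
  have coe_starSum (j : ℕ) :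
      ((starSum (invOddPow ℝ≥0) K j : ℝ≥0) : ℝ) = starSum (invOddPow ℝ) K j := by
    simpa only [NNReal.coe_toRealHom, coe_invOddPow] using
      map_starSum NNReal.toRealHom (invOddPow ℝ≥0) K j
  have h := congrArg NNReal.toReal (tsum_antitone_cons (invOddPow ℝ≥0) k K)
  rw [multTStar_eq_tsum_antitone]
  simpa only [NNReal.coe_tsum, apply_ite NNReal.toReal, NNReal.coe_prod, NNReal.coe_mul,
    NNReal.coe_zero, coe_invOddPow, coe_starSum] using h

end MultTStar

section AdmissibleIndices

/-- The admissible index with head `w.1 + 2` and tail `w.2` shifted by one: this parametrises the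
admissible indices freely by a natural number and a list of natural numbers. -/
def admissibleIndex (w : ℕ × List ℕ) : List ℕ := (w.1 + 2) :: w.2.map (· + 1)

theorem admissibleIndex_injective : Function.Injective admissibleIndex := by
  rintro ⟨a, L⟩ ⟨b, M⟩ h
  obtain ⟨rfl, hLM⟩ : a = b ∧ L.map (· + 1) = M.map (· + 1) := by simpa [admissibleIndex] using h
  rw [List.map_injective_iff.2 (add_left_injective 1) hLM]

theorem range_admissibleIndex : Set.range admissibleIndex = {K | Admissible K} := by
  ext K
  constructor
  · rintro ⟨w, rfl⟩
    simp [admissibleIndex, Admissible]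
  · rintro ⟨pos, two_le⟩
    obtain _ | ⟨k, K⟩ := K
    · simp at two_le
    refine ⟨(k - 2, K.map (· - 1)), ?_⟩
    have tail_shift : K.map ((· + 1) ∘ (· - 1)) = K :=
      (List.map_congr_left fun i hi ↦ Nat.sub_add_cancel (pos i (.tail k hi))).trans K.map_id
    rw [admissibleIndex, List.map_map, tail_shift]
    exact congrArg (· :: K) (Nat.sub_add_cancel two_le)

theorem sum_admissibleIndex (w : ℕ × List ℕ) :
    (admissibleIndex w).sum = w.1 + w.2.sum + w.2.length + 2 := by
  simp only [admissibleIndex, List.sum_cons, List.sum_map_add, List.map_id', List.map_const',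
    List.sum_replicate, smul_eq_mul]
  ring

theorem G0dStar_eq_tsum (p q : ℕ) :
    G0dStar (p + q + 2) (q + 1) = ∑' w : ℕ × List ℕ,
      if w.1 + w.2.sum = p ∧ w.2.length = q then multTStar (admissibleIndex w) else 0 := by
  rw [G0dStar, ← admissibleIndex_injective.tsum_eq]
  · refine tsum_congr fun w ↦ if_congr ?_ rfl rfl
    have admissible : Admissible (admissibleIndex w) :=
      range_admissibleIndex.le (Set.mem_range_self w)
    rw [and_iff_right admissible, sum_admissibleIndex, admissibleIndex, List.length_cons,
      List.length_map]
    lia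
  · rw [range_admissibleIndex]
    exact fun K hK ↦ by_contra fun h ↦ hK (if_neg fun hK' ↦ h hK'.1)

end AdmissibleIndices

section GeneratingFunction

variable {𝕜 : Type*} [RCLike 𝕜]

theorem norm_two_mul_add_one (j : ℕ) : ‖(2 * j + 1 : 𝕜)‖ = 2 * j + 1 := by
  exact_mod_cast RCLike.norm_natCast (K := 𝕜) (2 * j + 1)

theorem two_mul_add_one_sub_ne_zero {z : 𝕜} (hz : ‖z‖ < 1) (j : ℕ) : (2 * j + 1 - z : 𝕜) ≠ 0 := by
  intro h
  rw [← sub_eq_zero.1 h, norm_two_mul_add_one] at hz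
  linarith [j.cast_nonneg (α := ℝ)]

theorem norm_invOddPow (k j : ℕ) : ‖invOddPow 𝕜 k j‖ = invOddPow ℝ k j := by
  rw [invOddPow, norm_inv, norm_pow, norm_two_mul_add_one, invOddPow]

/-- The letter `k + 1` at the odd number `2j + 1`, weighted by `v` for its contribution to the
depth and by `uᵏ` for its contribution to the weight. -/
def letterWeight (u v : 𝕜) (k j : ℕ) : 𝕜 := v * u ^ k * invOddPow 𝕜 (k + 1) j

theorem norm_letterWeight (u v : 𝕜) (k j : ℕ) :
    ‖letterWeight u v k j‖ = letterWeight ‖u‖ ‖v‖ k j := by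
  simp only [letterWeight, norm_mul, norm_pow, norm_invOddPow]

theorem hasSum_letterWeight {u : 𝕜} (hu : ‖u‖ < 1) (v : 𝕜) (j : ℕ) :
    HasSum (letterWeight u v · j) (v / (2 * j + 1 - u)) := by
  have odd_ne_zero : (2 * j + 1 : 𝕜) ≠ 0 := by exact_mod_cast (2 * j).succ_ne_zero
  have ratio_lt : ‖u / (2 * j + 1)‖ < 1 := by
    rw [norm_div, norm_two_mul_add_one, div_lt_one (by positivity)]
    linarith [j.cast_nonneg (α := ℝ)]
  have geometric := (hasSum_geometric_of_norm_lt_one ratio_lt).mul_left (v / (2 * j + 1))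
  rw [one_sub_div odd_ne_zero, inv_div, div_mul_div_cancel₀ odd_ne_zero] at geometric
  refine geometric.congr_fun fun k ↦ ?_
  rw [letterWeight, invOddPow, pow_succ', mul_inv, div_pow]
  ring

theorem summable_norm_letterWeight {u : 𝕜} (hu : ‖u‖ < 1) (v : 𝕜) (j : ℕ) :
    Summable fun k ↦ ‖letterWeight u v k j‖ := by
  simp only [norm_letterWeight]
  exact (hasSum_letterWeight (by rwa [norm_norm]) ‖v‖ j).summable

theorem tsum_norm_letterWeight_lt_one {u v : 𝕜} (huv : ‖u‖ + ‖v‖ < 1) (j : ℕ) :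
    ∑' k, ‖letterWeight u v k j‖ < 1 := by
  have hu : ‖‖u‖‖ < 1 := by rw [norm_norm]; linarith [norm_nonneg v]
  simp only [norm_letterWeight, (hasSum_letterWeight hu ‖v‖ j).tsum_eq]
  rw [div_lt_one (by linarith [j.cast_nonneg (α := ℝ), norm_nonneg v])]
  linarith [j.cast_nonneg (α := ℝ)]

/-- The part with largest summation variable `2j + 1` of the term of the generating function
belonging to the admissible index `admissibleIndex w`. -/
noncomputable def indexTerm (u v : 𝕜) (j : ℕ) (w : ℕ × List ℕ) : 𝕜 :=
  u ^ (w.1 + w.2.sum) * v ^ w.2.length *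
    (invOddPow 𝕜 (w.1 + 2) j * starSum (invOddPow 𝕜) (w.2.map (· + 1)) (j + 1))

theorem starSum_letterWeight (u v : 𝕜) (L : List ℕ) (N : ℕ) :
    starSum (letterWeight u v) L N =
      u ^ L.sum * v ^ L.length * starSum (invOddPow 𝕜) (L.map (· + 1)) N := by
  have prod_weights : (L.map fun k ↦ v * u ^ k).prod = u ^ L.sum * v ^ L.length := by
    induction L with
    | nil => simp
    | cons k L ih =>
      simp only [List.map_cons, List.prod_cons, ih, List.sum_cons, List.length_cons]
      ring
  rw [starSum_map, ← prod_weights, ← starSum_mul_left]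
  rfl

theorem indexTerm_eq_mul (u v : 𝕜) (j : ℕ) (w : ℕ × List ℕ) :
    indexTerm u v j w =
      letterWeight u (2 * j + 1)⁻¹ w.1 j * starSum (letterWeight u v) w.2 (j + 1) := by
  rw [starSum_letterWeight, indexTerm, letterWeight, invOddPow, invOddPow, pow_succ _ (w.1 + 1),
    mul_inv, pow_add]
  ring

theorem norm_indexTerm_le (u v : 𝕜) (j : ℕ) (w : ℕ × List ℕ) :
    ‖indexTerm u v j w‖ ≤ indexTerm ‖u‖ ‖v‖ j w := by
  simp only [indexTerm, norm_mul, norm_pow, norm_invOddPow]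
  have invOddPow_nonneg : 0 ≤ invOddPow ℝ (w.1 + 2) j := by unfold invOddPow; positivity
  gcongr
  simpa only [norm_invOddPow] using norm_starSum_le (invOddPow 𝕜) (w.2.map (· + 1)) (j + 1)

/-- The closed form of the sum of `starSum (letterWeight u v) L N` over all words `L`. -/
noncomputable def tailProd (u v : 𝕜) (N : ℕ) : 𝕜 :=
  ∏ i ∈ Finset.range N, (1 - v / (2 * i + 1 - u))⁻¹

theorem tsum_starSum_letterWeight {u v : 𝕜} (huv : ‖u‖ + ‖v‖ < 1) (N : ℕ) :
    ∑' L, starSum (letterWeight u v) L N = tailProd u v N := by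
  have hu : ‖u‖ < 1 := by linarith [norm_nonneg v]
  rw [tsum_starSum (summable_norm_letterWeight hu v) (tsum_norm_letterWeight_lt_one huv)]
  simp only [(hasSum_letterWeight hu v _).tsum_eq, tailProd]

theorem tailProd_succ_div {u : 𝕜} (v : 𝕜) {N : ℕ} (hN : (2 * N + 1 - u : 𝕜) ≠ 0) :
    tailProd u v (N + 1) / (2 * N + 1 - u) = tailProd u v N / (2 * N + 1 - u - v) := by
  rw [tailProd, Finset.prod_range_succ, ← tailProd, one_sub_div hN, inv_div, mul_div_assoc,
    div_div_cancel_left' hN, div_eq_mul_inv]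

theorem tailProd_pos {u v : ℝ} (hv : 0 ≤ v) (huv : u + v < 1) (N : ℕ) : 0 < tailProd u v N :=
  Finset.prod_pos fun i _ ↦ by
    have den_gt : v < 2 * i + 1 - u := by linarith [i.cast_nonneg (α := ℝ)]
    exact inv_pos.2 (sub_pos.2 ((div_lt_one (hv.trans_lt den_gt)).2 den_gt))

/-- The part with largest summation variable `2j + 1` of the whole generating function, in closed
form. -/
noncomputable def sumWithMax (u v : 𝕜) (j : ℕ) : 𝕜 :=
  (2 * j + 1 : 𝕜)⁻¹ / (2 * j + 1 - u) * tailProd u v (j + 1)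

theorem hasSum_indexTerm {u v : 𝕜} (huv : ‖u‖ + ‖v‖ < 1) (j : ℕ) :
    HasSum (indexTerm u v j) (sumWithMax u v j) := by
  have hu : ‖u‖ < 1 := by linarith [norm_nonneg v]
  have head := hasSum_letterWeight hu (2 * j + 1 : 𝕜)⁻¹ j
  have norm_head := summable_norm_letterWeight hu (2 * j + 1 : 𝕜)⁻¹ j
  have norm_tail := summable_norm_starSum (summable_norm_letterWeight hu v)
    (tsum_norm_letterWeight_lt_one huv) (j + 1)
  have product := summable_mul_of_summable_norm norm_head norm_tail
  rw [sumWithMax, ← tsum_starSum_letterWeight huv]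
  exact (head.mul norm_tail.of_norm.hasSum product).congr_fun (indexTerm_eq_mul u v j)

theorem sumWithMax_le_sub {u v : ℝ} (hu : 0 ≤ u) (hv : 0 ≤ v) (huv : u + v < 1) (n : ℕ) :
    sumWithMax u v n ≤ 3 * (tailProd u v (n + 1) / (2 * n + 1 - u) -
      tailProd u v (n + 2) / (2 * (n + 1 : ℕ) + 1 - u)) := by
  set P := tailProd u v (n + 1)
  have P_pos : 0 < P := tailProd_pos hv huv (n + 1)
  have : (0 : ℝ) ≤ n := n.cast_nonneg
  have odd_sub_pos : 0 < 2 * n + 1 - u := by linarith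
  have next_sub_pos : 0 < 2 * (n + 1 : ℕ) + 1 - u - v := by push_cast; linarith
  have odd_ratio_le : 1 / (2 * n + 1) ≤ 3 * ((2 - v) / (2 * (n + 1 : ℕ) + 1 - u - v)) := by
    rw [mul_div_assoc', div_le_div_iff₀ (by positivity) next_sub_pos]
    push_cast
    nlinarith
  calc sumWithMax u v n = P / (2 * n + 1 - u) * (1 / (2 * n + 1)) := by rw [sumWithMax]; ring
    _ ≤ P / (2 * n + 1 - u) * (3 * ((2 - v) / (2 * (n + 1 : ℕ) + 1 - u - v))) := by gcongr
    _ = 3 * (P / (2 * n + 1 - u) - P / (2 * (n + 1 : ℕ) + 1 - u - v)) := by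
        field_simp
        push_cast
        ring
    _ = _ := by rw [← tailProd_succ_div v (N := n + 1) (by linarith)]

theorem summable_sumWithMax {u v : ℝ} (hu : 0 ≤ u) (hv : 0 ≤ v) (huv : u + v < 1) :
    Summable (sumWithMax u v) := by
  let B (n : ℕ) : ℝ := tailProd u v (n + 1) / (2 * n + 1 - u)
  have odd_sub_pos (n : ℕ) : 0 < 2 * n + 1 - u := by linarith [n.cast_nonneg (α := ℝ)]
  have B_nonneg (n : ℕ) : 0 ≤ B n :=
    div_nonneg (tailProd_pos hv huv (n + 1)).le (odd_sub_pos n).le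
  have sumWithMax_nonneg (n : ℕ) : 0 ≤ sumWithMax u v n :=
    mul_nonneg (div_nonneg (by positivity) (odd_sub_pos n).le) (tailProd_pos hv huv (n + 1)).le
  refine summable_of_sum_range_le (c := 3 * B 0) sumWithMax_nonneg fun N ↦ ?_
  calc ∑ n ∈ Finset.range N, sumWithMax u v n
      ≤ ∑ n ∈ Finset.range N, 3 * (B n - B (n + 1)) :=
        Finset.sum_le_sum fun n _ ↦ sumWithMax_le_sub hu hv huv n
    _ = 3 * (B 0 - B N) := by rw [← Finset.mul_sum, Finset.sum_range_sub']
    _ ≤ 3 * B 0 := by linarith [B_nonneg N]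

theorem summable_indexTerm {u v : 𝕜} (huv : ‖u‖ + ‖v‖ < 1) :
    Summable fun p : ℕ × (ℕ × List ℕ) ↦ indexTerm u v p.1 p.2 := by
  have majorant_nonneg (p : ℕ × (ℕ × List ℕ)) : 0 ≤ indexTerm ‖u‖ ‖v‖ p.1 p.2 :=
    (norm_nonneg _).trans (norm_indexTerm_le u v p.1 p.2)
  have row (j : ℕ) : HasSum (indexTerm ‖u‖ ‖v‖ j) (sumWithMax ‖u‖ ‖v‖ j) :=
    hasSum_indexTerm (by simpa only [norm_norm] using huv) j
  refine Summable.of_norm_bounded ((summable_prod_of_nonneg majorant_nonneg).2 ⟨?_, ?_⟩)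
    fun p ↦ norm_indexTerm_le u v p.1 p.2
  · exact fun j ↦ (row j).summable
  · simp only [(row _).tsum_eq]
    exact summable_sumWithMax (norm_nonneg u) (norm_nonneg v) huv

theorem tsum_indexTerm (u v : ℂ) (w : ℕ × List ℕ) :
    ∑' j, indexTerm u v j w =
      multTStar (admissibleIndex w) * u ^ (w.1 + w.2.sum) * v ^ w.2.length := by
  have ofReal_invOddPow (k j : ℕ) : (invOddPow ℝ k j : ℂ) = invOddPow ℂ k j :=
    map_invOddPow Complex.ofRealHom k j
  have ofReal_starSum (K : List ℕ) (N : ℕ) :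
      ((starSum (invOddPow ℝ) K N : ℝ) : ℂ) = starSum (invOddPow ℂ) K N := by
    simpa only [Complex.ofRealHom_eq_coe, ofReal_invOddPow] using
      map_starSum Complex.ofRealHom (invOddPow ℝ) K N
  simp only [indexTerm, tsum_mul_left, admissibleIndex, multTStar_cons, Complex.ofReal_tsum,
    Complex.ofReal_mul, ofReal_invOddPow, ofReal_starSum]
  ring

theorem hasSum_multTStar_s14 {u v : ℂ} (huv : ‖u‖ + ‖v‖ < 1) :
    HasSum (fun w : ℕ × List ℕ ↦
        (multTStar (admissibleIndex w) : ℂ) * u ^ (w.1 + w.2.sum) * v ^ w.2.length)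
      (∑' j, sumWithMax u v j) := by
  have summable := summable_indexTerm huv
  have rows := summable.hasSum.prod_fiberwise (hasSum_indexTerm huv)
  have columns := summable.prod_symm.hasSum.prod_fiberwise fun w ↦
    (summable.prod_symm.prod_factor w).hasSum
  rw [rows.tsum_eq, ← (Equiv.prodComm _ _).tsum_eq]
  simpa only [Equiv.prodComm_apply, Prod.swap_prod_mk, tsum_indexTerm] using columns

theorem hasSum_G0dStar {u v : ℂ} (huv : ‖u‖ + ‖v‖ < 1) :
    HasSum (fun p : ℕ × ℕ ↦ (G0dStar (p.1 + p.2 + 2) (p.2 + 1) : ℂ) * u ^ p.1 * v ^ p.2)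
      (∑' j, sumWithMax u v j) := by
  refine ((hasSum_multTStar_s14 huv).tsum_fiberwise
    fun w ↦ (w.1 + w.2.sum, w.2.length)).congr_fun fun ⟨p, q⟩ ↦ ?_
  rw [tsum_subtype ((fun w : ℕ × List ℕ ↦ (w.1 + w.2.sum, w.2.length)) ⁻¹' {(p, q)})
      fun w ↦ (multTStar (admissibleIndex w) : ℂ) * u ^ (w.1 + w.2.sum) * v ^ w.2.length,
    G0dStar_eq_tsum, Complex.ofReal_tsum, ← tsum_mul_right, ← tsum_mul_right]
  refine tsum_congr fun w ↦ ?_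
  by_cases hw : w.1 + w.2.sum = p ∧ w.2.length = q
  · obtain ⟨rfl, rfl⟩ := hw
    simp
  · simp [hw]

end GeneratingFunction

section Hypergeometric

theorem poch_succ (a : ℂ) (n : ℕ) : poch a (n + 1) = poch a n * (a + n) :=
  Finset.prod_range_succ _ n

theorem poch_succ' (a : ℂ) (n : ℕ) : poch a (n + 1) = a * poch (a + 1) n := by
  rw [poch, Finset.prod_range_succ', mul_comm, poch, Nat.cast_zero, add_zero]
  simp only [Nat.cast_succ, add_comm, add_left_comm]

theorem poch_one (n : ℕ) : poch 1 n = n.factorial := by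
  rw [poch, ← Finset.prod_range_add_one_eq_factorial]
  push_cast
  exact Finset.prod_congr rfl fun i _ ↦ add_comm _ _

theorem poch_half_div_poch_three_halves (n : ℕ) :
    poch (1 / 2) n / poch (3 / 2) n = (2 * n + 1 : ℂ)⁻¹ := by
  have three_halves_ne_zero : poch (3 / 2) n ≠ 0 := Finset.prod_ne_zero_iff.2 fun i _ ↦ by
    have odd_ne_zero : (2 * (i + 1 : ℕ) + 1 : ℂ) ≠ 0 := by exact_mod_cast (2 * (i + 1)).succ_ne_zero
    contrapose! odd_ne_zero
    push_cast
    linear_combination 2 * odd_ne_zero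
  have odd_ne_zero : (2 * n + 1 : ℂ) ≠ 0 := by exact_mod_cast (2 * n).succ_ne_zero
  have shift : poch (1 / 2) n * (1 / 2 + n) = 1 / 2 * poch (3 / 2) n := by
    rw [← poch_succ, poch_succ']
    norm_num
  rw [div_eq_iff three_halves_ne_zero, eq_inv_mul_iff_mul_eq₀ odd_ne_zero]
  linear_combination 2 * shift

theorem tailProd_eq_poch_div_poch {u : ℂ} (hu : ‖u‖ < 1) (v : ℂ) (N : ℕ) :
    tailProd u v N = poch ((1 - u) / 2) N / poch ((1 - u - v) / 2) N := by
  rw [tailProd, poch, poch, ← Finset.prod_div_distrib]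
  refine Finset.prod_congr rfl fun i _ ↦ ?_
  rw [one_sub_div (two_mul_add_one_sub_ne_zero hu i), inv_div,
    ← div_div_div_cancel_right₀ two_ne_zero]
  congr 1 <;> ring

theorem sumWithMax_eq_hypergeometric_term {u : ℂ} (hu : ‖u‖ < 1) (v : ℂ) (n : ℕ) :
    sumWithMax u v n = (1 - u - v)⁻¹ *
      (poch ((1 - u) / 2) n * poch (1 / 2) n * poch 1 n /
        (n.factorial * poch ((3 - u - v) / 2) n * poch (3 / 2) n) * 1 ^ n) := by
  have odd_sub_ne_zero := two_mul_add_one_sub_ne_zero hu n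
  have factorial_ne_zero : (n.factorial : ℂ) ≠ 0 := Nat.cast_ne_zero.2 n.factorial_ne_zero
  have shift : (1 - u - v) / 2 + 1 = (3 - u - v) / 2 := by ring
  calc sumWithMax u v n
      = (2 * n + 1 : ℂ)⁻¹ / (2 * n + 1 - u) * (poch ((1 - u) / 2) n * ((1 - u) / 2 + n) /
          ((1 - u - v) / 2 * poch ((3 - u - v) / 2) n)) := by
        rw [sumWithMax, tailProd_eq_poch_div_poch hu, poch_succ, poch_succ', shift]
    _ = (1 - u - v)⁻¹ * (poch ((1 - u) / 2) n / poch ((3 - u - v) / 2) n *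
          (2 * n + 1 : ℂ)⁻¹) := by
        field_simp
        ring
    _ = _ := by
        rw [poch_one, ← poch_half_div_poch_three_halves, one_pow]
        field_simp

end Hypergeometric

theorem weight_depth_generating_function_multiple_t_star_general {u v : ℂ}
    (huv : ‖u‖ + ‖v‖ < 1) :
    HasSum (fun p : ℕ × ℕ ↦ (G0dStar (p.1 + p.2 + 2) (p.2 + 1) : ℂ) * u ^ p.1 * v ^ p.2)
      ((1 - u - v)⁻¹ * hyp3F2 ((1 - u) / 2) (1 / 2) 1 ((3 - u - v) / 2) (3 / 2) 1) := by
  have hu : ‖u‖ < 1 := by linarith [norm_nonneg v]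
  rw [hyp3F2, ← tsum_mul_left]
  simpa only [sumWithMax_eq_hypergeometric_term hu v] using hasSum_G0dStar huv

/-- Generating function of the sums `G₀*(k,n)` of multiple `t`-star values of fixed weight
and depth: `∑_{k>n≥1} G₀*(k,n) u^{k-n-1} v^{n-1}
 = (1/(1-u-v)) ⬝ ₃F₂((1-u)/2, 1/2, 1; (3-u-v)/2, 3/2; 1)`. -/
theorem weight_depth_generating_function_multiple_t_star :
    ∃ δ > (0 : ℝ), ∀ u v : ℝ, |u| < δ → |v| < δ →
      Summable (fun p : ℕ × ℕ =>
        G0dStar (p.1 + p.2 + 2) (p.2 + 1) * u ^ p.1 * v ^ p.2) ∧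
      ((∑' p : ℕ × ℕ, G0dStar (p.1 + p.2 + 2) (p.2 + 1) * u ^ p.1 * v ^ p.2 : ℝ) : ℂ)
        = (1 - (u : ℂ) - (v : ℂ))⁻¹ *
            hyp3F2 ((1 - (u : ℂ)) / 2) (1 / 2) 1
              ((3 - (u : ℂ) - (v : ℂ)) / 2) (3 / 2) 1 := by
  refine ⟨1 / 2, one_half_pos, fun u v hu hv ↦ ?_⟩
  have norm_lt : ‖(u : ℂ)‖ + ‖(v : ℂ)‖ < 1 := by
    rw [Complex.norm_real, Complex.norm_real, Real.norm_eq_abs, Real.norm_eq_abs]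
    linarith
  have hasSum := weight_depth_generating_function_multiple_t_star_general norm_lt
  have term_ofReal (p : ℕ × ℕ) : (G0dStar (p.1 + p.2 + 2) (p.2 + 1) : ℂ) * u ^ p.1 * v ^ p.2 =
      (G0dStar (p.1 + p.2 + 2) (p.2 + 1) * u ^ p.1 * v ^ p.2 : ℝ) := by push_cast; rfl
  simp only [term_ofReal] at hasSum
  exact ⟨Complex.summable_ofReal.1 hasSum.summable, by rw [Complex.ofReal_tsum, hasSum.tsum_eq]⟩
end

section
/- Fix real u, v, w with |u|, |v|, |w| sufficiently small, and for 0 < z < 1 let Φ_0(z) = ∑_{k ≥ n+s, n ≥ s ≥ 1} G_0(k,n,s;z) u^{k−n−s} v^{n−s} w^{s−1}. Then Φ_0 satisfies the differential equation z(1−z²)Φ_0''(z) + [(1−u)(1−z²) − vz²]Φ_0'(z) + (uv−w)zΦ_0(z) = 1 on (0,1). -/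
open scoped BigOperators

/-!
Exchange the sum over indices `K = (k₁, …, kₙ)` with the sum over `m₁ > ⋯ > mₙ` defining `L_K(z)`.
For fixed `mᵢ` the sum over `kᵢ` is geometric, and each odd `j < m₁` either occurs among
`m₂, …, mₙ` or does not. Hence `Φ₀(z) = ∑ c_m z ^ m` over odd `m`, with
`c_m = 1 / (m (m - u)) * ∏_{j < m, j odd} (1 + v / j + w / (j (j - u)))`.
The ratio of consecutive coefficients is
`(m + 2) (m + 2 - u) c_{m + 2} = ((m + v) (m - u) + w) c_m`,
which is the differential equation read off coefficientwise, with right-hand side `(1 - u) c_1 = 1`.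
-/

open Filter Topology Finset

section PowerSeries

variable {𝕜 : Type*} [RCLike 𝕜] {c : ℕ → 𝕜} {f : 𝕜 → 𝕜} {r : ℝ}

lemma hasFPowerSeriesOnBall_of_hasSum_mul_pow (hr : 0 < r)
    (hf : ∀ z, ‖z‖ < r → HasSum (fun m => c m * z ^ m) (f z)) :
    HasFPowerSeriesOnBall f (FormalMultilinearSeries.ofScalars 𝕜 c) 0 (ENNReal.ofReal r) where
  r_le := by
    refine ENNReal.le_of_forall_nnreal_lt fun s hs => ?_
    have hs' : ‖((s : ℝ) : 𝕜)‖ < r := by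
      simpa [ENNReal.ofReal, Real.lt_toNNReal_iff_coe_lt] using hs
    refine FormalMultilinearSeries.le_radius_of_tendsto _ (l := 0) ?_
    simpa using (hf _ hs').summable.tendsto_atTop_zero.norm
  r_pos := ENNReal.ofReal_pos.mpr hr
  hasSum {z} hz := by
    rw [Metric.eball_ofReal, mem_ball_zero_iff] at hz
    simpa [mul_comm] using hf z hz

lemma hasSum_deriv_of_hasSum_mul_pow
    (hf : ∀ z, ‖z‖ < r → HasSum (fun m => c m * z ^ m) (f z)) {z : 𝕜} (hz : ‖z‖ < r) :
    HasSum (fun m : ℕ => (m + 1) * c (m + 1) * z ^ m) (deriv f z) := by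
  have hderiv := (hasFPowerSeriesOnBall_of_hasSum_mul_pow ((norm_nonneg z).trans_lt hz) hf).fderiv
  have hz' : z ∈ Metric.eball 0 (ENNReal.ofReal r) := by
    rwa [Metric.eball_ofReal, mem_ball_zero_iff]
  have hsum := (hderiv.hasSum hz').mapL (ContinuousLinearMap.apply 𝕜 𝕜 (1 : 𝕜))
  simpa [mul_comm] using hsum

lemma hasSum_mul_pow_of_shift {a b : ℕ → 𝕜} {s z : 𝕜} (ha : HasSum (fun m => a m * z ^ m) s)
    (hb₀ : b 0 = 0) (hb : ∀ m, b (m + 1) = a m) : HasSum (fun m => b m * z ^ m) (z * s) := by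
  rw [← hasSum_nat_add_iff' 1]
  simpa [hb₀, hb, pow_succ', mul_left_comm] using ha.mul_left z

lemma differential_equation_of_recurrence {u v w z : 𝕜}
    (hrec : ∀ m : ℕ, ((m : 𝕜) + 2) * (m + 2 - u) * c (m + 2) = ((m + v) * (m - u) + w) * c m)
    (hf : ∀ z, ‖z‖ < r → HasSum (fun m => c m * z ^ m) (f z)) (hz : ‖z‖ < r) :
    z * (1 - z ^ 2) * deriv (deriv f) z + ((1 - u) * (1 - z ^ 2) - v * z ^ 2) * deriv f z
      + (u * v - w) * z * f z = (1 - u) * c 1 := by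
  have hf' := fun z hz => hasSum_deriv_of_hasSum_mul_pow (z := z) hf hz
  have hzf' : HasSum (fun m : ℕ => m * c m * z ^ m) (z * deriv f z) :=
    hasSum_mul_pow_of_shift (hf' z hz) (by simp) (by simp)
  have hzf'' : HasSum (fun m : ℕ => m * (m + 1) * c (m + 1) * z ^ m) (z * deriv (deriv f) z) :=
    hasSum_mul_pow_of_shift (hasSum_deriv_of_hasSum_mul_pow hf' hz) (by simp) (by simp [mul_assoc])
  have hzzf'' : HasSum (fun m : ℕ => m * (m - 1) * c m * z ^ m) (z * (z * deriv (deriv f) z)) :=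
    hasSum_mul_pow_of_shift hzf'' (by simp) (by simp [mul_comm])
  have hleft : HasSum (fun m : ℕ => (m + 2) * (m + 2 - u) * c (m + 2) * z ^ (m + 1))
      (z * deriv (deriv f) z + (1 - u) * deriv f z - (1 - u) * c 1) := by
    convert! (hasSum_nat_add_iff' 1).mpr (hzf''.add ((hf' z hz).mul_left (1 - u))) using 1
    · ext m
      push_cast
      ring
    · simp
  have hright : HasSum (fun m : ℕ => ((m + v) * (m - u) + w) * c m * z ^ (m + 1))
      (z * (z * (z * deriv (deriv f) z) + (1 - u + v) * (z * deriv f z) + (w - u * v) * f z)) := by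
    convert! ((hzzf''.add (hzf'.mul_left (1 - u + v))).add
      ((hf z hz).mul_left (w - u * v))).mul_left z using 1
    ext m
    ring
  simp only [hrec] at hleft
  linear_combination hleft.unique hright

end PowerSeries

section Summation

lemma summable_of_hasSum_norm_prod {α β E : Type*} [NormedAddCommGroup E] [CompleteSpace E]
    {f : α × β → E} {g : α → ℝ} (hf : ∀ a, HasSum (fun b => ‖f (a, b)‖) (g a))
    (hg : Summable g) : Summable f := by
  refine .of_norm ((summable_prod_of_nonneg fun _ => norm_nonneg _).mpr ⟨fun a => ?_, ?_⟩)
  · exact (hf a).summable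
  · exact hg.congr fun a => (hf a).tsum_eq.symm

lemma hasSum_mul_prod {α β : Type*} {f : α → ℝ} {g : β → ℝ} {s t : ℝ} (hf : HasSum f s)
    (hg : HasSum g t) : HasSum (fun x : α × β => f x.1 * g x.2) (s * t) :=
  hf.mul hg (summable_mul_of_summable_norm hf.summable.norm hg.summable.norm)

lemma hasSum_of_hasSum_cons {α M : Type*} [AddCommMonoid M] [TopologicalSpace M]
    {f : List α → M} {s : M} (hnil : f [] = 0)
    (hcons : HasSum (fun x : α × List α => f (x.1 :: x.2)) s) : HasSum f s := by
  have hinj : Function.Injective fun x : α × List α => x.1 :: x.2 := by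
    rintro ⟨a, K⟩ ⟨b, L⟩ h
    simpa using h
  refine (hinj.hasSum_iff fun K hK => ?_).mp hcons
  cases K with
  | nil => exact hnil
  | cons k K => exact absurd ⟨(k, K), rfl⟩ hK

lemma summable_prod_one_add_mul_pow {𝕜 : Type*} [NormedField 𝕜] [CompleteSpace 𝕜] {a : ℕ → 𝕜}
    (p : ℕ → Prop) [DecidablePred p] (ha : Tendsto a atTop (𝓝 0)) {z : 𝕜} (hz : ‖z‖ < 1) :
    Summable fun m => (∏ j ∈ range m with p j, (1 + a j)) * z ^ m := by
  obtain ⟨r, hzr, hr⟩ := exists_between hz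
  have hlim : Tendsto (fun m => ‖1 + a m‖ * ‖z‖) atTop (𝓝 ‖z‖) := by
    simpa using (ha.const_add 1).norm.mul_const ‖z‖
  refine summable_of_ratio_norm_eventually_le hr ?_
  filter_upwards [hlim.eventually_le_const hzr] with m hm
  have hfactor : ‖if p m then 1 + a m else 1‖ * ‖z‖ ≤ r := by
    split_ifs
    · exact hm
    · simpa using hzr.le
  simp only [prod_filter, prod_range_succ, pow_succ, mul_mul_mul_comm _ _ (z ^ m) z, norm_mul]
  rw [mul_comm]
  gcongr

end Summation

section Polylogarithm

/-- The summand of `multT K` at `m`. -/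
noncomputable def oddChainTerm (K : List ℕ) (m : Fin K.length → ℕ) : ℝ :=
  if (∀ i, Odd (m i)) ∧ StrictAnti m then ∏ i, ((m i : ℝ) ^ K.get i)⁻¹ else 0

/-- The truncated multiple `t`-value: the part of the series `multT K` with all `mᵢ < M`. -/
noncomputable def truncT (K : List ℕ) (M : ℕ) : ℝ :=
  ∑ m ∈ Fintype.piFinset fun _ : Fin K.length => range M, oddChainTerm K m

/-- The coefficient of `z ^ j` in the multiple polylogarithm of the index `(k, K)`. -/
noncomputable def ltCoeff (k : ℕ) (K : List ℕ) (j : ℕ) : ℝ :=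
  if Odd j then ((j : ℝ) ^ k)⁻¹ * truncT K j else 0

variable (k : ℕ) (K : List ℕ)

lemma oddChainTerm_nonneg (m : Fin K.length → ℕ) : 0 ≤ oddChainTerm K m := by
  unfold oddChainTerm
  split_ifs <;> positivity

lemma oddChainTerm_le_one (m : Fin K.length → ℕ) : oddChainTerm K m ≤ 1 := by
  unfold oddChainTerm
  split_ifs with hm
  · refine prod_le_one (fun i _ => by positivity) fun i _ => ?_
    exact inv_le_one_of_one_le₀ (one_le_pow₀ (by exact_mod_cast (hm.1 i).pos))
  · exact zero_le_one

lemma truncT_nonneg (M : ℕ) : 0 ≤ truncT K M :=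
  sum_nonneg fun m _ => oddChainTerm_nonneg K m

lemma truncT_le (M : ℕ) : truncT K M ≤ (M : ℝ) ^ K.length := by
  refine (sum_le_card_nsmul _ _ 1 fun m _ => oddChainTerm_le_one K m).trans_eq ?_
  simp

@[simp]
lemma truncT_nil (M : ℕ) : truncT [] M = 1 := by
  simp [truncT, oddChainTerm, StrictAnti]

@[simp]
lemma truncT_cons_zero : truncT (k :: K) 0 = 0 := by
  simp [truncT]

lemma ltCoeff_nonneg (j : ℕ) : 0 ≤ ltCoeff k K j := by
  have := truncT_nonneg K j
  unfold ltCoeff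
  split_ifs <;> positivity

lemma ltCoeff_le (j : ℕ) : ltCoeff k K j ≤ (j : ℝ) ^ K.length := by
  unfold ltCoeff
  split_ifs with hj
  · have : ((j : ℝ) ^ k)⁻¹ ≤ 1 := inv_le_one_of_one_le₀ (one_le_pow₀ (by exact_mod_cast hj.pos))
    exact (mul_le_of_le_one_left (truncT_nonneg K j) this).trans (truncT_le K j)
  · positivity

lemma hasSum_ite_oddChainTerm (M : ℕ) :
    HasSum (fun m => if ∀ i, m i < M then oddChainTerm K m else 0) (truncT K M) := by
  have hsupp : ∀ m ∉ Fintype.piFinset fun _ : Fin K.length => range M,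
      (if ∀ i, m i < M then oddChainTerm K m else 0) = 0 :=
    fun m hm => if_neg (by simpa using hm)
  have hsum := hasSum_sum_of_ne_finset_zero (L := .unconditional _) hsupp
  rwa [sum_congr rfl fun m hm => if_pos (by simpa using hm)] at hsum

lemma strictAnti_finCons_iff {α : Type*} [Preorder α] {n : ℕ} {a : α} {m : Fin n → α} :
    StrictAnti (Fin.cons a m : Fin (n + 1) → α) ↔ (∀ i, m i < a) ∧ StrictAnti m := by
  simp [StrictAnti, Fin.forall_fin_succ]

lemma oddChainTerm_cons (j : ℕ) (m : Fin K.length → ℕ) :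
    oddChainTerm (k :: K) (Fin.cons j m : Fin (K.length + 1) → ℕ) =
      if Odd j then ((j : ℝ) ^ k)⁻¹ * if ∀ i, m i < j then oddChainTerm K m else 0 else 0 := by
  have hprod : ∏ i : Fin (K.length + 1), (((Fin.cons j m : Fin (K.length + 1) → ℕ) i : ℝ) ^
      (k :: K).get i)⁻¹ = ((j : ℝ) ^ k)⁻¹ * ∏ i, ((m i : ℝ) ^ K.get i)⁻¹ := by
    rw [Fin.prod_univ_succ]
    simp
  have hodd : (∀ i, Odd ((Fin.cons j m : Fin (K.length + 1) → ℕ) i)) ↔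
      Odd j ∧ ∀ i, Odd (m i) := by
    simp [Fin.forall_fin_succ]
  simp only [oddChainTerm, List.length_cons, hprod, hodd, strictAnti_finCons_iff]
  grind

lemma hasSum_oddChainTerm_cons (j : ℕ) :
    HasSum (fun m => oddChainTerm (k :: K) (Fin.cons j m : Fin (K.length + 1) → ℕ))
      (ltCoeff k K j) := by
  simp only [oddChainTerm_cons, ltCoeff]
  split_ifs
  · exact (hasSum_ite_oddChainTerm K j).mul_left _
  · exact hasSum_zero

lemma hasSum_mul_oddChainTerm_cons {φ : ℕ → ℝ} (hφ : Summable fun j => ltCoeff k K j * |φ j|) :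
    HasSum (fun m : Fin (K.length + 1) → ℕ => oddChainTerm (k :: K) m * φ (m 0))
      (∑' j, ltCoeff k K j * φ j) := by
  rw [← (Fin.consEquiv fun _ : Fin (K.length + 1) => ℕ).hasSum_iff]
  have hsum : Summable fun x : ℕ × (Fin K.length → ℕ) =>
      oddChainTerm (k :: K) (Fin.cons x.1 x.2 : Fin (K.length + 1) → ℕ) * φ x.1 := by
    refine summable_of_hasSum_norm_prod (fun j => ?_) hφ
    simpa only [Real.norm_eq_abs, abs_mul, abs_of_nonneg (oddChainTerm_nonneg _ _)] using
      (hasSum_oddChainTerm_cons k K j).mul_right |φ j|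
  have hfiber := hsum.hasSum.prod_fiberwise fun j =>
    (hasSum_oddChainTerm_cons k K j).mul_right (φ j)
  rw [hfiber.tsum_eq]
  exact hsum.hasSum

lemma truncT_cons (M : ℕ) : truncT (k :: K) M = ∑ j ∈ range M, ltCoeff k K j := by
  set φ : ℕ → ℝ := fun j => if j < M then 1 else 0 with hφ
  have hzero : ∀ j ∉ range M, ltCoeff k K j * φ j = 0 := by
    simp +contextual [hφ]
  have habs (j : ℕ) : |φ j| = φ j := abs_of_nonneg (by positivity)
  have hchain := hasSum_mul_oddChainTerm_cons k K (φ := φ)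
    (by simpa only [habs] using summable_of_ne_finset_zero hzero)
  have hterm (m : Fin (K.length + 1) → ℕ) : oddChainTerm (k :: K) m * φ (m 0) =
      if ∀ i, m i < M then oddChainTerm (k :: K) m else 0 := by
    by_cases hm : StrictAnti m
    · have : (∀ i, m i < M) ↔ m 0 < M :=
        ⟨fun h => h 0, fun h i => (hm.antitone (Fin.zero_le i)).trans_lt h⟩
      simp [hφ, this]
    · simp [oddChainTerm, hm]
  simp only [hterm] at hchain
  rw [(hasSum_ite_oddChainTerm (k :: K) M).unique hchain, tsum_eq_sum hzero]
  refine sum_congr rfl fun j hj => ?_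
  simp [hφ, mem_range.mp hj]

lemma truncT_cons_succ (M : ℕ) :
    truncT (k :: K) (M + 1) = truncT (k :: K) M + ltCoeff k K M := by
  rw [truncT_cons, truncT_cons, sum_range_succ]

lemma Lt_cons_eq_tsum (z : ℝ) :
    Lt (k :: K) z = ∑' m : Fin (K.length + 1) → ℕ, oddChainTerm (k :: K) m * z ^ m 0 := by
  refine tsum_congr fun m => ?_
  have hpos : 0 < K.length + 1 := K.length.succ_pos
  simp only [oddChainTerm, StrictAnti, List.length_cons, hpos, and_true]
  grind

lemma hasSum_Lt_cons {z : ℝ} (hz : |z| < 1) :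
    HasSum (fun j => ltCoeff k K j * z ^ j) (Lt (k :: K) z) := by
  have hbound : Summable fun j : ℕ => (j : ℝ) ^ K.length * |z| ^ j :=
    summable_pow_mul_geometric_of_norm_lt_one _ (by simpa using hz)
  have habs : Summable fun j => ltCoeff k K j * |z ^ j| := by
    refine hbound.of_nonneg_of_le (fun j => ?_) fun j => ?_
    · exact mul_nonneg (ltCoeff_nonneg k K j) (abs_nonneg _)
    · rw [abs_pow]
      gcongr
      exact ltCoeff_le k K j
  rw [Lt_cons_eq_tsum, (hasSum_mul_oddChainTerm_cons k K habs).tsum_eq]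
  refine (Summable.of_abs ?_).hasSum
  simpa only [abs_mul, abs_of_nonneg (ltCoeff_nonneg k K _)] using habs

lemma hasSum_prod_map_mul_truncT {ω a : ℕ → ℝ}
    (ha : ∀ j : ℕ, Odd j → HasSum (fun k => ω k * ((j : ℝ) ^ k)⁻¹) (a j)) (M : ℕ) :
    HasSum (fun K : List ℕ => (K.map ω).prod * truncT K M)
      (∏ j ∈ range M with Odd j, (1 + a j)) := by
  -- `truncT K (M + 1) - truncT K M` is the contribution of the chains with `m₁ = M`.
  induction M with
  | zero =>
    convert! hasSum_ite_eq ([] : List ℕ) (1 : ℝ) using 1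
    ext K
    cases K <;> simp
  | succ M ih =>
    have hstep : HasSum (fun K : List ℕ => (K.map ω).prod * (truncT K (M + 1) - truncT K M))
        (if Odd M then a M * ∏ j ∈ range M with Odd j, (1 + a j) else 0) := by
      refine hasSum_of_hasSum_cons (by simp) ?_
      simp only [truncT_cons_succ, add_sub_cancel_left, ltCoeff, List.map_cons, List.prod_cons]
      split_ifs with hM
      · convert! hasSum_mul_prod (ha M hM) ih using 2 with x
        ring
      · simp only [mul_zero]
        exact hasSum_zero
    convert! ih.add hstep using 1
    · ext K
      ring
    · rw [range_add_one, filter_insert]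
      split_ifs with hM
      · rw [prod_insert (by simp)]
        ring
      · rw [add_zero]

end Polylogarithm

section Indices

variable {K : List ℕ}

lemma sum_eq_of_forall_one_le (hK : ∀ k ∈ K, 1 ≤ k) :
    K.sum = (K.map (· - 2)).sum + K.count 1 + 2 * K.countP fun k => 2 ≤ k := by
  induction K with
  | nil => simp
  | cons k K ih =>
    simp only [List.forall_mem_cons] at hK
    simp only [List.sum_cons, List.map_cons, List.count_cons, List.countP_cons, ih hK.2]
    grind

lemma length_eq_of_forall_one_le (hK : ∀ k ∈ K, 1 ≤ k) :
    K.length = K.count 1 + K.countP fun k => 2 ≤ k := by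
  induction K with
  | nil => simp
  | cons k K ih =>
    simp only [List.forall_mem_cons] at hK
    simp only [List.length_cons, List.count_cons, List.countP_cons, ih hK.2]
    grind

lemma Admissible.countP_pos (hK : Admissible K) : 0 < K.countP fun k => 2 ≤ k := by
  rcases K with _ | ⟨k, K⟩
  · simp [Admissible] at hK
  · exact List.countP_pos_iff.mpr ⟨k, by simp, by simpa using hK.2⟩

/-- The exponents `(k - n - s, n - s, s - 1)` of `u`, `v`, `w` attached to an admissible index of
weight `k`, depth `n` and height `s`. -/
def exponents (K : List ℕ) : ℕ × ℕ × ℕ :=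
  ((K.map (· - 2)).sum, K.count 1, K.countP (fun k => 2 ≤ k) - 1)

lemma Admissible.exponents_eq_iff (hK : Admissible K) {a b c : ℕ} :
    exponents K = (a, b, c) ↔ K.sum = a + b + 2 * c + 2 ∧ K.length = b + c + 1 ∧
      K.countP (fun k => 2 ≤ k) = c + 1 := by
  have hsum := sum_eq_of_forall_one_le hK.1
  have hlength := length_eq_of_forall_one_le hK.1
  have hpos := hK.countP_pos
  simp only [exponents, Prod.mk.injEq]
  omega

end Indices

section Weights

/-- The weight `u ^ (k - 2)` that the generating function attaches to the first entry `k ≥ 2` of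
an admissible index; it vanishes for `k ≤ 1`. -/
def headWeight (u : ℝ) : ℕ → ℝ
  | 0 => 0
  | 1 => 0
  | k + 2 => u ^ k

/-- The weight that the generating function attaches to an entry of an index other than the
first: `v` for the entry `1` and `w * u ^ (k - 2)` for an entry `k ≥ 2`. -/
def entryWeight (u v w : ℝ) : ℕ → ℝ
  | 0 => 0
  | 1 => v
  | k + 2 => w * u ^ k

/-- The weight `u ^ (k - n - s) * v ^ (n - s) * w ^ (s - 1)` of an admissible index of weight `k`,
depth `n` and height `s`, as a product over its entries; it vanishes on all other lists. -/
def indexWeight (u v w : ℝ) : List ℕ → ℝ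
  | [] => 0
  | k :: K => headWeight u k * (K.map (entryWeight u v w)).prod

variable (u v w : ℝ)

lemma abs_headWeight (k : ℕ) : |headWeight u k| = headWeight |u| k := by
  rcases k with _ | _ | k <;> simp [headWeight]

lemma abs_entryWeight (k : ℕ) : |entryWeight u v w k| = entryWeight |u| |v| |w| k := by
  rcases k with _ | _ | k <;> simp [entryWeight, abs_mul]

lemma abs_indexWeight (K : List ℕ) : |indexWeight u v w K| = indexWeight |u| |v| |w| K := by
  have hprod (L : List ℕ) :
      |(L.map (entryWeight u v w)).prod| = (L.map (entryWeight |u| |v| |w|)).prod := by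
    induction L with
    | nil => simp
    | cons k L ih => simp [abs_mul, abs_entryWeight, ih]
  cases K <;> simp [indexWeight, abs_mul, abs_headWeight, hprod]

lemma prod_map_entryWeight {K : List ℕ} (hK : ∀ k ∈ K, 1 ≤ k) :
    (K.map (entryWeight u v w)).prod =
      u ^ (K.map (· - 2)).sum * v ^ K.count 1 * w ^ K.countP fun k => 2 ≤ k := by
  induction K with
  | nil => simp
  | cons k K ih =>
    simp only [List.forall_mem_cons] at hK
    rw [List.map_cons, List.prod_cons, ih hK.2]
    rcases k with _ | _ | k
    · simp at hK
    · simp [entryWeight, pow_succ', mul_assoc, mul_left_comm]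
    · simp [entryWeight, pow_succ', pow_add, mul_assoc, mul_left_comm]

lemma prod_map_entryWeight_of_zero_mem {K : List ℕ} (hK : 0 ∈ K) :
    (K.map (entryWeight u v w)).prod = 0 :=
  List.prod_eq_zero (List.mem_map.mpr ⟨0, hK, rfl⟩)

lemma indexWeight_of_admissible {K : List ℕ} (hK : Admissible K) :
    indexWeight u v w K =
      u ^ (exponents K).1 * v ^ (exponents K).2.1 * w ^ (exponents K).2.2 := by
  obtain ⟨hpos, hhead⟩ := hK
  rcases K with _ | ⟨_ | _ | k, K⟩
  · simp at hhead
  · simp at hhead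
  · simp at hhead
  · rw [indexWeight, prod_map_entryWeight u v w (List.forall_mem_cons.mp hpos).2]
    simp [headWeight, exponents, pow_add, mul_assoc]

lemma indexWeight_of_not_admissible {K : List ℕ} (hK : ¬Admissible K) :
    indexWeight u v w K = 0 := by
  rcases K with _ | ⟨_ | _ | k, K⟩
  · rfl
  · simp [indexWeight, headWeight]
  · simp [indexWeight, headWeight]
  · have hzero : 0 ∈ K := by
      simpa [Admissible, Nat.one_le_iff_ne_zero] using hK
    rw [indexWeight, prod_map_entryWeight_of_zero_mem u v w hzero, mul_zero]

end Weights

section GeneratingFunction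

/-- The sum over `k` of `headWeight u k / m ^ k`, in closed form for `|u| < m`. -/
noncomputable def headSum (u : ℝ) (m : ℕ) : ℝ := 1 / (m * (m - u))

/-- The sum over `k` of `entryWeight u v w k / m ^ k`, in closed form for `|u| < m`. -/
noncomputable def entrySum (u v w : ℝ) (m : ℕ) : ℝ := v / m + w * headSum u m

/-- The coefficient of `z ^ m` in the generating function `Φ₀`. -/
noncomputable def phi0Coeff (u v w : ℝ) (m : ℕ) : ℝ :=
  if Odd m then headSum u m * ∏ j ∈ range m with Odd j, (1 + entrySum u v w j) else 0

lemma hasSum_headWeight {u : ℝ} {m : ℕ} (hu : |u| < m) :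
    HasSum (fun k => headWeight u k * ((m : ℝ) ^ k)⁻¹) (headSum u m) := by
  have hm : (0 : ℝ) < m := (abs_nonneg u).trans_lt hu
  have hratio : |u / m| < 1 := by rwa [abs_div, Nat.abs_cast, div_lt_one hm]
  rw [← hasSum_nat_add_iff' 2]
  convert! (hasSum_geometric_of_abs_lt_one hratio).mul_left ((m : ℝ) ^ 2)⁻¹ using 1
  · ext k
    simp only [headWeight, div_pow, pow_add]
    field_simp
  · have : (m : ℝ) - u ≠ 0 := (sub_pos.mpr (lt_of_abs_lt hu)).ne'
    simp only [sum_range_succ, sum_range_zero, headWeight, headSum]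
    field_simp
    ring

lemma hasSum_entryWeight {u : ℝ} (v w : ℝ) {m : ℕ} (hu : |u| < m) :
    HasSum (fun k => entryWeight u v w k * ((m : ℝ) ^ k)⁻¹) (entrySum u v w m) := by
  have hone : HasSum (fun k => if k = 1 then v / m else 0) (v / m) := hasSum_ite_eq 1 _
  convert! hone.add ((hasSum_headWeight hu).mul_left w) using 1
  ext k
  rcases k with _ | _ | k <;> simp [entryWeight, headWeight, div_eq_mul_inv, mul_assoc]

lemma tendsto_headSum (u : ℝ) : Tendsto (headSum u) atTop (𝓝 0) := by
  have hsub : Tendsto (fun m : ℕ => (m : ℝ) - u) atTop atTop :=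
    tendsto_atTop_add_const_right _ _ tendsto_natCast_atTop_atTop
  exact (tendsto_natCast_atTop_atTop.atTop_mul_atTop₀ hsub).const_div_atTop 1

lemma tendsto_entrySum (u v w : ℝ) : Tendsto (entrySum u v w) atTop (𝓝 0) := by
  have hsum := (tendsto_const_div_atTop_nhds_zero_nat v).add ((tendsto_headSum u).const_mul w)
  rwa [mul_zero, add_zero] at hsum

lemma summable_phi0Coeff_mul_pow (u v w : ℝ) {z : ℝ} (hz : |z| < 1) :
    Summable fun m => phi0Coeff u v w m * z ^ m := by
  set P : ℕ → ℝ := fun m => (∏ j ∈ range m with Odd j, (1 + entrySum u v w j)) * z ^ m with hP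
  have hle : (fun m => phi0Coeff u v w m * z ^ m) =O[atTop] fun m => headSum u m * P m := by
    refine .of_bound' (.of_forall fun m => ?_)
    simp only [phi0Coeff, hP, ite_mul, zero_mul, mul_assoc]
    split_ifs
    · exact le_rfl
    · simpa using by positivity
  have hbounded : (fun m => headSum u m * P m) =O[atTop] P := by
    simpa using ((tendsto_headSum u).isBigO_one ℝ).mul (Asymptotics.isBigO_refl P atTop)
  exact summable_of_isBigO_nat
    (summable_prod_one_add_mul_pow Odd (tendsto_entrySum u v w) hz) (hle.trans hbounded)

lemma hasSum_indexWeight_mul_ltCoeff {u : ℝ} (hu : |u| < 1) (v w : ℝ) (m : ℕ) :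
    HasSum (fun x : ℕ × List ℕ => indexWeight u v w (x.1 :: x.2) * ltCoeff x.1 x.2 m)
      (phi0Coeff u v w m) := by
  have hlt {j : ℕ} (hj : Odd j) : |u| < j := hu.trans_le (by exact_mod_cast hj.pos)
  simp only [indexWeight, ltCoeff, phi0Coeff]
  split_ifs with hm
  · have hhead := hasSum_headWeight (hlt hm)
    have htail := hasSum_prod_map_mul_truncT (fun j hj => hasSum_entryWeight v w (hlt hj)) m
    convert! hasSum_mul_prod hhead htail using 2 with x
    ring
  · simp only [mul_zero]
    exact hasSum_zero

lemma hasSum_indexWeight_mul_Lt {u z : ℝ} (hu : |u| < 1) (v w : ℝ) (hz : |z| < 1) :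
    HasSum (fun K => indexWeight u v w K * Lt K z) (∑' m, phi0Coeff u v w m * z ^ m) := by
  have hsum : Summable fun x : ℕ × ℕ × List ℕ =>
      indexWeight u v w (x.2.1 :: x.2.2) * ltCoeff x.2.1 x.2.2 x.1 * z ^ x.1 := by
    -- The absolute values of the terms are the terms for `|u|`, `|v|`, `|w|`, `|z|`.
    refine summable_of_hasSum_norm_prod (fun m => ?_)
      (summable_phi0Coeff_mul_pow |u| |v| |w| (by rwa [abs_abs] : |(|z|)| < 1))
    simpa only [Real.norm_eq_abs, abs_mul, abs_pow, abs_indexWeight,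
      abs_of_nonneg (ltCoeff_nonneg _ _ _)] using
      (hasSum_indexWeight_mul_ltCoeff (by rwa [abs_abs]) |v| |w| m).mul_right (|z| ^ m)
  have hrow := hsum.hasSum.prod_fiberwise fun m =>
    (hasSum_indexWeight_mul_ltCoeff hu v w m).mul_right (z ^ m)
  rw [hrow.tsum_eq]
  refine hasSum_of_hasSum_cons (by simp [indexWeight]) ?_
  refine ((Equiv.prodComm _ _).hasSum_iff.mpr hsum.hasSum).prod_fiberwise fun x => ?_
  convert! (hasSum_Lt_cons x.1 x.2 hz).mul_left (indexWeight u v w (x.1 :: x.2)) using 2 with m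
  exact mul_assoc _ _ _

/-- The generating function `Φ₀`. The summation variables are `(k - n - s, n - s, s - 1)`, which
run over all triples of natural numbers. -/
noncomputable def phi0 (u v w z : ℝ) : ℝ :=
  ∑' p : ℕ × ℕ × ℕ, G0hz (p.1 + p.2.1 + 2 * p.2.2 + 2) (p.2.1 + p.2.2 + 1) (p.2.2 + 1) z
    * u ^ p.1 * v ^ p.2.1 * w ^ p.2.2

lemma G0hz_mul_eq_tsum (u v w z : ℝ) (a b c : ℕ) :
    G0hz (a + b + 2 * c + 2) (b + c + 1) (c + 1) z * u ^ a * v ^ b * w ^ c =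
      ∑' K : exponents ⁻¹' {(a, b, c)}, indexWeight u v w K * Lt K z := by
  rw [_root_.tsum_subtype _ fun K => indexWeight u v w K * Lt K z, G0hz]
  simp only [← tsum_mul_right]
  refine tsum_congr fun K => ?_
  by_cases hK : Admissible K
  · by_cases hexp : K ∈ exponents ⁻¹' {(a, b, c)}
    · rw [Set.indicator_of_mem hexp, if_pos ⟨hK, hK.exponents_eq_iff.mp hexp⟩,
        indexWeight_of_admissible u v w hK, show exponents K = (a, b, c) from hexp]
      ring
    · rw [Set.indicator_of_notMem hexp, if_neg fun h => hexp (hK.exponents_eq_iff.mpr h.2)]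
      simp
  · rw [Set.indicator_apply_eq_zero.mpr fun _ => by
      rw [indexWeight_of_not_admissible u v w hK, zero_mul], if_neg fun h => hK h.1]
    simp

lemma hasSum_phi0 {u z : ℝ} (hu : |u| < 1) (v w : ℝ) (hz : |z| < 1) :
    HasSum (fun m => phi0Coeff u v w m * z ^ m) (phi0 u v w z) := by
  have hfiber := (hasSum_indexWeight_mul_Lt hu v w hz).tsum_fiberwise exponents
  have hphi0 : phi0 u v w z = ∑' m, phi0Coeff u v w m * z ^ m := by
    rw [← hfiber.tsum_eq]
    exact tsum_congr fun p => G0hz_mul_eq_tsum u v w z p.1 p.2.1 p.2.2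
  rw [hphi0]
  exact (summable_phi0Coeff_mul_pow u v w hz).hasSum

lemma phi0Coeff_one {u : ℝ} (hu : |u| < 1) (v w : ℝ) : (1 - u) * phi0Coeff u v w 1 = 1 := by
  have : 1 - u ≠ 0 := (sub_pos.mpr (lt_of_abs_lt hu)).ne'
  simp [phi0Coeff, headSum, this, filter_singleton]

lemma phi0Coeff_recurrence {u : ℝ} (hu : |u| < 1) (v w : ℝ) (m : ℕ) :
    ((m : ℝ) + 2) * (m + 2 - u) * phi0Coeff u v w (m + 2) =
      ((m + v) * (m - u) + w) * phi0Coeff u v w m := by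
  by_cases hm : Odd m
  · have hm₁ : (1 : ℝ) ≤ m := by exact_mod_cast hm.pos
    have hmu : (m : ℝ) - u ≠ 0 := by linarith [lt_of_abs_lt hu]
    have hmu₂ : (m : ℝ) + 2 - u ≠ 0 := by linarith [lt_of_abs_lt hu]
    have hfilter : {j ∈ range (m + 2) | Odd j} = insert m {j ∈ range m | Odd j} := by
      rw [range_add_one, range_add_one, filter_insert, filter_insert, if_neg (by grind), if_pos hm]
    rw [phi0Coeff, phi0Coeff, if_pos hm, if_pos (by grind), hfilter, prod_insert (by simp)]
    simp only [headSum, entrySum]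
    push_cast
    field_simp
    ring
  · have : ¬Odd (m + 2) := by grind
    simp [phi0Coeff, hm, this]

theorem phi0_differential_equation_general {u z : ℝ} (hu : |u| < 1) (v w : ℝ) (hz : |z| < 1) :
    z * (1 - z ^ 2) * deriv (deriv (phi0 u v w)) z
      + ((1 - u) * (1 - z ^ 2) - v * z ^ 2) * deriv (phi0 u v w) z
      + (u * v - w) * z * phi0 u v w z = 1 :=
  (differential_equation_of_recurrence (phi0Coeff_recurrence hu v w)
    (fun _ hy => hasSum_phi0 hu v w hy) hz).trans (phi0Coeff_one hu v w)

end GeneratingFunction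

/-- The generating function `Φ₀(z)` of the sums `G₀(k,n,s;z)` of one-variable multiple
polylogarithms satisfies the differential equation
`z(1-z²)Φ₀'' + [(1-u)(1-z²) - vz²]Φ₀' + (uv-w)zΦ₀ = 1` on `(0,1)` (Proposition 3.1). -/
theorem phi0_differential_equation :
    ∃ δ > (0 : ℝ), ∀ u v w : ℝ, |u| < δ → |v| < δ → |w| < δ →
      ∀ z ∈ Set.Ioo (0 : ℝ) 1,
        (fun Φ₀ : ℝ → ℝ =>
          z * (1 - z ^ 2) * deriv (deriv Φ₀) z
            + ((1 - u) * (1 - z ^ 2) - v * z ^ 2) * deriv Φ₀ z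
            + (u * v - w) * z * Φ₀ z = 1)
        (fun z : ℝ => ∑' p : ℕ × ℕ × ℕ,
          G0hz (p.1 + p.2.1 + 2 * p.2.2 + 2) (p.2.1 + p.2.2 + 1) (p.2.2 + 1) z
            * u ^ p.1 * v ^ p.2.1 * w ^ p.2.2) :=
  ⟨1, one_pos, fun _ v w hu _ _ _ hz =>
    phi0_differential_equation_general hu v w (abs_lt.mpr ⟨by linarith [hz.1], hz.2⟩)⟩
end
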